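/- arXiv:1703.02848 — 2 statements merged into one kernel-verified Lean document; each statement's English description precedes it below -/
import Mathlib

section
/- Let n = 63 and let x, y ∈ S_63 be the permutations given in the context, with z = (x·y)⁻¹. Then (x, y, z) is a nice triple; the cycle types of x, y, z are 7^9, 2^28 and 4^12·2^6 respectively; and the subgroup ⟨x, y⟩ of S_63 has cardinality 12096 (the order of Aut(PSU(3,3))). -/
/-- `permInd s` = (sum of the cycle type of `s`) − (number of entries of the cycle type of `s`),
i.e. `n` minus the number of cycles of `s` when fixed points are counted as cycles. -/
def permInd {n : ℕ} (s : Equiv.Perm (Fin n)) : ℕ :=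
  s.cycleType.sum - Multiset.card s.cycleType

/-- A `MulAction` is preprimitive if it is pretransitive and every block is trivial. -/
def IsPreprimitive (G : Type*) (X : Type*) [Group G] [MulAction G X] : Prop :=
  MulAction.IsPretransitive G X ∧
    ∀ B : Set X, MulAction.IsBlock G B → MulAction.IsTrivialBlock B

/-- A triple `(x, y, z)` of permutations in `S_n` is *nice*:
(i) `x * y * z = 1`; (ii) `G = ⟨x, y⟩` is neither the alternating nor the symmetric group;
(iii) `G` acts primitively on `Fin n` and is almost simple; (iv) the triple has genus 0;
(v) the triple is rigid in `G`; (vi) `x`, `y`, `z` lie in rational conjugacy classes of `G`. -/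
def IsNice {n : ℕ} (x y z : Equiv.Perm (Fin n)) : Prop :=
  x * y * z = 1 ∧
  (Subgroup.closure {x, y} ≠ alternatingGroup (Fin n) ∧
    Subgroup.closure {x, y} ≠ ⊤) ∧
  IsPreprimitive (Subgroup.closure {x, y}) (Fin n) ∧
  (∃ S : Subgroup (Subgroup.closure {x, y}), S.Normal ∧ IsSimpleGroup S ∧
    (∃ a b : S, a * b ≠ b * a) ∧
    Subgroup.centralizer (S : Set (Subgroup.closure {x, y})) = ⊥) ∧
  permInd x + permInd y + permInd z = 2 * (n - 1) ∧
  (∀ x' y' z' : Equiv.Perm (Fin n),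
    x' * y' * z' = 1 →
    Subgroup.closure {x', y'} = Subgroup.closure {x, y} →
    (∃ g ∈ Subgroup.closure {x, y}, g * x * g⁻¹ = x') →
    (∃ g ∈ Subgroup.closure {x, y}, g * y * g⁻¹ = y') →
    (∃ g ∈ Subgroup.closure {x, y}, g * z * g⁻¹ = z') →
    ∃ g ∈ Subgroup.closure {x, y},
      g * x * g⁻¹ = x' ∧ g * y * g⁻¹ = y' ∧ g * z * g⁻¹ = z') ∧
  ∀ g ∈ ({x, y, z} : Set (Equiv.Perm (Fin n))), ∀ k : ℤ,
    Int.gcd k (orderOf g) = 1 →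
    ∃ h ∈ Subgroup.closure {x, y}, h * g * h⁻¹ = g ^ k

/-- The permutation given by a list of (disjoint) cycles, each written as a list of points. -/
def permOfCycles {n : ℕ} (cs : List (List (Fin n))) : Equiv.Perm (Fin n) :=
  (cs.map List.formPerm).prod

def x : Equiv.Perm (Fin 63) := permOfCycles [
  [1, 43, 31, 39, 63, 35, 2],
  [3, 17, 24, 21, 20, 55, 53],
  [4, 29, 62, 11, 14, 45, 27],
  [5, 38, 23, 32, 48, 18, 51],
  [6, 13, 36, 47, 25, 8, 61],
  [7, 9, 15, 56, 34, 28, 42],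
  [10, 33, 59, 60, 44, 19, 37],
  [12, 26, 52, 30, 54, 49, 41],
  [16, 40, 57, 50, 22, 46, 58]]

def y : Equiv.Perm (Fin 63) := permOfCycles [
  [2, 53],
  [3, 9],
  [4, 38],
  [5, 29],
  [6, 51],
  [8, 25],
  [10, 19],
  [11, 20],
  [12, 44],
  [13, 43],
  [14, 21],
  [16, 40],
  [17, 32],
  [18, 39],
  [22, 62],
  [23, 30],
  [24, 26],
  [27, 59],
  [33, 54],
  [34, 63],
  [35, 56],
  [36, 55],
  [41, 49],
  [42, 48],
  [45, 60],
  [46, 61],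
  [47, 50],
  [57, 58]]

/-!
The permutations `x` and `y` are collineations of a generalized hexagon of order `(2, 2)` on the 63
points, and distances in the hexagon are invariants of `G = ⟨x, y⟩`. When the points `7, 4, 28, 31`
are fixed one after the other, distances bound the successive orbits from above, words in `x` and
`y` bound them from below, and only the identity fixes all four; so `|G| = 63 · 32 · 3 · 2`.

Let `S` be the normal subgroup of `G` generated by `x` and `y x y⁻¹`. A block of `S` or `G` that
contains `7` and another point is stable under the stabilizer of `7`, hence contains some
`x ^ k • 7 ≠ 7`, hence is stable under `x` and is everything: both actions are primitive. A
nontrivial normal subgroup of a primitive group is transitive, so its order is divisible by `7`;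
as `49 ∤ |G|`, it contains every element of order `7`. Hence `S` is simple and its centralizer in
`G` is trivial.

For rigidity, `y` fixes every point collinear with `7`, and its conjugates with this property are
four elations. Thus up to conjugation by powers of `x` there are `9 · 4` conjugates `t` of `y`, and
`y` is the only one among them for which `x * t` has order `4`.
-/

namespace HexagonTriple

open MulAction Pointwise

section GroupTheory

variable {M X : Type*} [Group M]

theorem closure_pair_le_normalizer_closure_conj {g h : M} (hh : h * h = 1) :
    Subgroup.closure {g, h} ≤
      Subgroup.normalizer (Subgroup.closure {g, h * g * h⁻¹} : Set M) := by
  have hinv : h⁻¹ = h := inv_eq_of_mul_eq_one_left hh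
  have hgg : h * (h * g * h⁻¹) * h⁻¹ = g := by
    simp [hinv, mul_assoc, ← mul_assoc h h, hh]
  refine (Subgroup.closure_le _).mpr (Set.insert_subset ?_ (Set.singleton_subset_iff.mpr ?_))
  · exact Subgroup.le_normalizer (Subgroup.subset_closure (Set.mem_insert _ _))
  · apply Subgroup.normalizer_le_normalizer_closure
    rw [Subgroup.mem_normalizer_iff_conj_image_eq, Set.image_pair, MulAut.conj_apply,
      MulAut.conj_apply, hgg, Set.pair_comm]

/-- `IsRationalIn H g` says that the conjugacy class of `g` under `H` is rational: it contains every
power `g ^ k` with `k` coprime to the order of `g`. -/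
def IsRationalIn (H : Subgroup M) (g : M) : Prop :=
  ∀ k : ℤ, Int.gcd k (orderOf g) = 1 → ∃ h ∈ H, h * g * h⁻¹ = g ^ k

theorem pow_conj_eq_pow_pow {g h : M} {r : ℕ} (hconj : h * g * h⁻¹ = g ^ r) (m : ℕ) :
    h ^ m * g * (h ^ m)⁻¹ = g ^ r ^ m := by
  induction m with
  | zero => simp
  | succ m ih =>
    calc h ^ (m + 1) * g * (h ^ (m + 1))⁻¹
        = h ^ m * (h * g * h⁻¹) * (h ^ m)⁻¹ := by rw [pow_succ]; group
      _ = g ^ r ^ (m + 1) := by rw [hconj, ← conj_pow, ih, ← pow_mul, pow_succ]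

theorem isRationalIn_of_conj_eq_pow {H : Subgroup M} {g h : M} {n r : ℕ} [NeZero n]
    (hn : orderOf g = n) (hh : h ∈ H) (hconj : h * g * h⁻¹ = g ^ r)
    (hr : ∀ k < n, k.Coprime n → ∃ m < n, r ^ m % n = k) : IsRationalIn H g := by
  intro k hk
  rw [hn] at hk
  have hn0 : (n : ℤ) ≠ 0 := mod_cast NeZero.ne n
  obtain ⟨j, hj⟩ := Int.eq_ofNat_of_zero_le (Int.emod_nonneg k hn0)
  have hjn : j < n := by
    have := Int.emod_lt_of_pos k (b := n) (by have := NeZero.pos n; omega)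
    omega
  have hjk : j.Coprime n := by
    rw [Nat.Coprime, ← Int.gcd_natCast_natCast, ← hj, Int.gcd_emod, hk]
  obtain ⟨m, -, hm⟩ := hr j hjn hjk
  refine ⟨h ^ m, H.pow_mem hh m, ?_⟩
  rw [pow_conj_eq_pow_pow hconj, ← zpow_natCast, zpow_eq_zpow_iff_modEq, hn]
  rw [Int.ModEq, hj, ← hm]
  push_cast
  rfl

theorem exists_simultaneous_conj {H : Subgroup M} {g h g' h' k' : M}
    (hcent : ∀ c ∈ H, orderOf (g * (c * h * c⁻¹)) = orderOf (g * h) →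
      ∃ e ∈ H, Commute e g ∧ c * h * c⁻¹ = e * h * e⁻¹)
    (hprod : g' * h' * k' = 1) (hg : ∃ c ∈ H, c * g * c⁻¹ = g')
    (hh : ∃ c ∈ H, c * h * c⁻¹ = h') (hk : ∃ c ∈ H, c * (g * h)⁻¹ * c⁻¹ = k') :
    ∃ c ∈ H, c * g * c⁻¹ = g' ∧ c * h * c⁻¹ = h' ∧ c * (g * h)⁻¹ * c⁻¹ = k' := by
  obtain ⟨a, ha, rfl⟩ := hg
  obtain ⟨b, hb, rfl⟩ := hh
  obtain ⟨c, -, rfl⟩ := hk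
  have hconj : MulAut.conj (a⁻¹ * c) (g * h) = g * (a⁻¹ * b * h * (a⁻¹ * b)⁻¹) := by
    have hc : c * (g * h) * c⁻¹ = a * g * a⁻¹ * (b * h * b⁻¹) := by
      rw [eq_inv_of_mul_eq_one_left hprod]; group
    calc a⁻¹ * c * (g * h) * (a⁻¹ * c)⁻¹ = a⁻¹ * (c * (g * h) * c⁻¹) * a := by group
      _ = g * (a⁻¹ * b * h * (a⁻¹ * b)⁻¹) := by rw [hc]; group
  obtain ⟨e, he, heg, hbe⟩ := hcent (a⁻¹ * b) (H.mul_mem (H.inv_mem ha) hb)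
    (by rw [← hconj, MulEquiv.orderOf_eq])
  have hga : a * e * g * (a * e)⁻¹ = a * g * a⁻¹ := by
    rw [mul_assoc a, heg.eq]; group
  have hhb : a * e * h * (a * e)⁻¹ = b * h * b⁻¹ := by
    calc a * e * h * (a * e)⁻¹ = a * (e * h * e⁻¹) * a⁻¹ := by group
      _ = b * h * b⁻¹ := by rw [← hbe]; group
  refine ⟨a * e, H.mul_mem ha he, hga, hhb, ?_⟩
  rw [eq_inv_of_mul_eq_one_right hprod, ← hga, ← hhb]
  group

variable [MulAction M X]

theorem isPreprimitive_of_prime_order {H K : Subgroup M} {b : X} {g : M} {p : ℕ} (hp : p.Prime)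
    (hgp : g ^ p = 1) (hgH : g ∈ H) (hKH : K ≤ H) (hKb : ∀ s ∈ K, s • b = b)
    (hmeet : ∀ q ≠ b, ∃ k : ℕ, ∃ s ∈ K, s • g ^ k • b = q)
    (htrans : ∀ q, ∃ h ∈ K ⊔ Subgroup.zpowers g, h • b = q) :
    MulAction.IsPreprimitive H X := by
  have hle : K ⊔ Subgroup.zpowers g ≤ H := sup_le hKH (Subgroup.zpowers_le.mpr hgH)
  have : IsPretransitive H X := IsPretransitive.of_orbit (x₀ := b) fun q ↦ by
    obtain ⟨h, hh, rfl⟩ := htrans q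
    exact ⟨⟨h, hle hh⟩, rfl⟩
  refine MulAction.IsPreprimitive.of_isTrivialBlock_base b fun {B} hb hB ↦ ?_
  have hstab : ∀ h ∈ H, h • b ∈ B → h ∈ stabilizer M B :=
    fun h hh hhb ↦ hB.smul_eq_of_mem (g := ⟨h, hh⟩) hb hhb
  have hK : K ≤ stabilizer M B := fun s hs ↦ hstab s (hKH hs) (by rwa [hKb s hs])
  refine or_iff_not_imp_left.mpr fun hnontriv ↦ Set.eq_univ_of_forall fun q ↦ ?_
  obtain ⟨c, hcB, hcb⟩ : ∃ c ∈ B, c ≠ b := by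
    by_contra! hsub
    exact hnontriv fun c hc d hd ↦ (hsub c hc).trans (hsub d hd).symm
  obtain ⟨k, s, hs, rfl⟩ := hmeet c hcb
  have hgkb : g ^ k • b ∈ B := by rwa [← hK hs, Set.smul_mem_smul_set_iff] at hcB
  have hgk : g ^ k ∈ stabilizer M B := hstab _ (H.pow_mem hgH k) hgkb
  -- `g` has prime order, so it is a power of the nontrivial element `g ^ k`.
  have hg : g ∈ stabilizer M B := by
    have hpk : ¬ p ∣ k := fun ⟨j, hj⟩ ↦ hcb (by rw [hj, pow_mul, hgp, one_pow, one_smul, hKb s hs])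
    have hcop : k.Coprime (orderOf g) :=
      ((hp.coprime_iff_not_dvd.mpr hpk).coprime_dvd_left (orderOf_dvd_of_pow_eq_one hgp)).symm
    obtain ⟨m, hm⟩ := exists_pow_eq_self_of_coprime hcop
    exact hm ▸ Subgroup.pow_mem _ hgk m
  obtain ⟨h, hh, rfl⟩ := htrans q
  have hhB : h ∈ stabilizer M B := sup_le hK (Subgroup.zpowers_le.mpr hg) hh
  exact hhB ▸ Set.smul_mem_smul_set hb

variable [FaithfulSMul M X] [Nonempty X]

theorem mem_of_normal_of_pow_prime_eq_one [IsQuasiPreprimitive M X] {N : Subgroup M} [N.Normal]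
    (hN : N ≠ ⊥) {p : ℕ} (hp : p.Prime) (hpX : p ∣ Nat.card X) (hpM : ¬ p * p ∣ Nat.card M)
    {g : M} (hg : g ^ p = 1) : g ∈ N := by
  have hpN : p ∣ Nat.card N := by
    have hfix : fixedPoints N X ≠ Set.univ := fun huniv ↦ hN <|
      (Subgroup.eq_bot_iff_forall N).mpr fun n hn ↦ FaithfulSMul.eq_of_smul_eq_smul fun q : X ↦ by
        have hq : q ∈ fixedPoints N X := huniv ▸ Set.mem_univ q
        simpa using! hq ⟨n, hn⟩
    have := IsQuasiPreprimitive.isPretransitive_of_normal hfix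
    obtain ⟨q⟩ := ‹Nonempty X›
    exact hpX.trans (index_stabilizer_of_transitive N q ▸ Subgroup.index_dvd_card _)
  by_contra hgN
  have hquot : orderOf (g : M ⧸ N) = p := by
    have := Fact.mk hp
    refine orderOf_eq_prime ?_ (by rwa [Ne, QuotientGroup.eq_one_iff])
    rw [← QuotientGroup.mk_pow, hg, QuotientGroup.mk_one]
  apply hpM
  rw [Subgroup.card_eq_card_quotient_mul_card_subgroup N]
  exact mul_dvd_mul (hquot ▸ orderOf_dvd_natCard _) hpN

theorem isSimpleGroup_of_closure_pow_prime_eq_one [Nontrivial M] [IsQuasiPreprimitive M X]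
    {p : ℕ} (hp : p.Prime) (hpX : p ∣ Nat.card X) (hpM : ¬ p * p ∣ Nat.card M)
    {s : Set M} (hs : Subgroup.closure s = ⊤) (hsp : ∀ g ∈ s, g ^ p = 1) : IsSimpleGroup M where
  eq_bot_or_eq_top_of_normal N _ := or_iff_not_imp_left.mpr fun hN ↦ top_le_iff.mp <|
    hs ▸ (Subgroup.closure_le N).mpr fun g hg ↦
      mem_of_normal_of_pow_prime_eq_one hN hp hpX hpM (hsp g hg)

theorem centralizer_eq_bot_of_pow_prime_eq_one [IsQuasiPreprimitive M X] {S : Subgroup M} [S.Normal]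
    {p : ℕ} (hp : p.Prime) (hpX : p ∣ Nat.card X) (hpM : ¬ p * p ∣ Nat.card M)
    {g h : M} (hg : g ^ p = 1) (hh : h ∈ S) (hgh : ¬ Commute h g) :
    Subgroup.centralizer (S : Set M) = ⊥ := by
  by_contra hbot
  have hgS := mem_of_normal_of_pow_prime_eq_one hbot hp hpX hpM hg
  exact hgh (Subgroup.mem_centralizer_iff.mp hgS h hh)

theorem exists_isSimpleGroup_normal_centralizer_eq_bot {S G : Subgroup M} (hSG : S ≤ G)
    (hnormal : G ≤ Subgroup.normalizer (S : Set M)) (hsimple : IsSimpleGroup S)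
    [IsQuasiPreprimitive G X] {p : ℕ} (hp : p.Prime) (hpX : p ∣ Nat.card X)
    (hpG : ¬ p * p ∣ Nat.card G) {a b : M} (ha : a ∈ S) (hb : b ∈ S) (hap : a ^ p = 1)
    (hab : ¬ Commute a b) :
    ∃ T : Subgroup G, T.Normal ∧ IsSimpleGroup T ∧ (∃ c d : T, c * d ≠ d * c) ∧
      Subgroup.centralizer (T : Set G) = ⊥ := by
  have hT : (S.subgroupOf G).Normal :=
    (Subgroup.normal_subgroupOf_iff_le_normalizer hSG).mpr hnormal
  refine ⟨S.subgroupOf G, hT, (Subgroup.subgroupOfEquivOfLe hSG).isSimpleGroup,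
    ⟨⟨⟨a, hSG ha⟩, ha⟩, ⟨⟨b, hSG hb⟩, hb⟩, fun h ↦ hab ?_⟩,
    centralizer_eq_bot_of_pow_prime_eq_one (X := X) (g := ⟨a, hSG ha⟩) (h := ⟨b, hSG hb⟩) hp hpX hpG
      (Subtype.ext hap) hb fun h ↦ hab ?_⟩
  · exact congrArg (fun s : S.subgroupOf G ↦ ((s : G) : M)) h
  · exact congrArg Subtype.val h.eq.symm

end GroupTheory

theorem permInd_eq_of_cycleType_eq {n : ℕ} {s : Equiv.Perm (Fin n)} {m : Multiset ℕ}
    (hs : s.cycleType = m) : permInd s = m.sum - Multiset.card m := by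
  rw [permInd, hs]

theorem cycleType_permOfCycles {n : ℕ} {cs : List (List (Fin n))}
    (hcycle : ∀ c ∈ cs, c.Nodup ∧ 2 ≤ c.length) (hdisj : cs.Pairwise fun c d ↦ ∀ p ∈ c, p ∉ d) :
    (permOfCycles cs).cycleType = (cs.map List.length : List ℕ) := by
  rw [permOfCycles, Equiv.Perm.cycleType_eq (cs.map List.formPerm) rfl]
  · rw [List.map_map]
    congr 1
    refine List.map_congr_left fun c hc ↦ ?_
    obtain ⟨hnodup, hlen⟩ := hcycle c hc
    rw [Function.comp_apply, Function.comp_apply,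
      List.support_formPerm_of_nodup c hnodup (by rintro p rfl; simp at hlen),
      List.toFinset_card_of_nodup hnodup]
  · intro s hs
    obtain ⟨c, hc, rfl⟩ := List.mem_map.mp hs
    exact List.isCycle_formPerm (hcycle c hc).1 (hcycle c hc).2
  · refine List.pairwise_map.mpr (hdisj.imp_of_mem fun {c d} hc hd hcd ↦ ?_)
    exact (List.formPerm_disjoint_iff (hcycle c hc).1 (hcycle d hd).1 (hcycle c hc).2
      (hcycle d hd).2).mpr (fun p hpc hpd ↦ hcd p hpc hpd)

section Permutations

variable {α : Type*}

/-- The subgroup of the elements of `H` that fix every point of the list `F`. -/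
def pointwiseStabilizer (H : Subgroup (Equiv.Perm α)) (F : List α) : Subgroup (Equiv.Perm α) :=
  H ⊓ fixingSubgroup (Equiv.Perm α) {p | p ∈ F}

theorem mem_pointwiseStabilizer {H : Subgroup (Equiv.Perm α)} {F : List α} {g : Equiv.Perm α} :
    g ∈ pointwiseStabilizer H F ↔ g ∈ H ∧ ∀ p ∈ F, g p = p := by
  simp [pointwiseStabilizer, mem_fixingSubgroup_iff]

theorem card_pointwiseStabilizer_eq_ncard_mul (H : Subgroup (Equiv.Perm α)) (F : List α) (b : α) :
    Nat.card (pointwiseStabilizer H F) =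
      {q | ∃ g ∈ pointwiseStabilizer H F, g b = q}.ncard *
        Nat.card (pointwiseStabilizer H (b :: F)) := by
  have horbit : orbit (pointwiseStabilizer H F) b = {q | ∃ g ∈ pointwiseStabilizer H F, g b = q} :=
    Set.ext fun q ↦ ⟨fun ⟨g, hg⟩ ↦ ⟨g, g.2, hg⟩, fun ⟨g, hg, hgb⟩ ↦ ⟨⟨g, hg⟩, hgb⟩⟩
  have hstab : (stabilizer (pointwiseStabilizer H F) b).map (pointwiseStabilizer H F).subtype =
      pointwiseStabilizer H (b :: F) := by
    ext g
    simp [mem_pointwiseStabilizer, and_comm (a := g b = b), and_left_comm, and_assoc]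
  rw [← Subgroup.index_mul_card (stabilizer (pointwiseStabilizer H F) b), index_stabilizer, horbit,
    ← hstab, Subgroup.card_map_of_injective (Subgroup.subtype_injective _)]

variable [DecidableEq α]

/-- The points found by a depth-first search with at most `fuel` steps that starts from the points
of `todo` and moves along the permutations `fs`; `seen` accumulates the points already found. -/
def reach (fs : List (Equiv.Perm α)) : (fuel : ℕ) → (todo seen : List α) → List α
  | 0, _, seen => seen
  | _, [], seen => seen
  | n + 1, p :: todo, seen =>
    if p ∈ seen then reach fs n todo seen
    else reach fs n (fs.map (· p) ++ todo) (p :: seen)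

theorem forall_mem_reach {fs : List (Equiv.Perm α)} {P : α → Prop}
    (hP : ∀ f ∈ fs, ∀ p, P p → P (f p)) (fuel : ℕ) {todo seen : List α}
    (htodo : ∀ p ∈ todo, P p) (hseen : ∀ p ∈ seen, P p) : ∀ p ∈ reach fs fuel todo seen, P p := by
  induction fuel, todo, seen using reach.induct (fs := fs) with
  | case1 => simpa [reach] using hseen
  | case2 => simpa [reach] using hseen
  | case3 n q todo seen hq ih =>
    rw [reach, if_pos hq]
    exact ih (fun p hp ↦ htodo p (List.mem_cons_of_mem q hp)) hseen
  | case4 n q todo seen hq ih =>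
    have hPq : P q := htodo q List.mem_cons_self
    rw [reach, if_neg hq]
    refine ih (fun p hp ↦ ?_) (List.forall_mem_cons.mpr ⟨hPq, hseen⟩)
    obtain hp | hp := List.mem_append.mp hp
    · obtain ⟨f, hf, rfl⟩ := List.mem_map.mp hp
      exact hP f hf q hPq
    · exact htodo p (List.mem_cons_of_mem q hp)

theorem exists_apply_eq_of_mem_reach {H : Subgroup (Equiv.Perm α)} {fs : List (Equiv.Perm α)}
    (hfs : ∀ f ∈ fs, f ∈ H) {fuel : ℕ} {seeds : List α} {q : α} (hq : q ∈ reach fs fuel seeds []) :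
    ∃ b ∈ seeds, ∃ g ∈ H, g b = q := by
  refine forall_mem_reach (P := fun q ↦ ∃ b ∈ seeds, ∃ g ∈ H, g b = q) ?_ fuel
    (fun p hp ↦ ⟨p, hp, 1, H.one_mem, rfl⟩) (by simp) q hq
  rintro f hf _ ⟨b, hb, g, hg, rfl⟩
  exact ⟨b, hb, f * g, H.mul_mem (hfs f hf) hg, rfl⟩

end Permutations

section Geometry

variable {α : Type*} (L : List (List α))

/-- The permutations of the points that map every line of `L` into a line of `L`. -/
def lineMaps : Submonoid (Equiv.Perm α) where
  carrier := {g | ∀ ℓ ∈ L, ∃ m ∈ L, ℓ.map g ⊆ m}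
  one_mem' ℓ hℓ := ⟨ℓ, hℓ, by simp⟩
  mul_mem' {g h} hg hh ℓ hℓ := by
    obtain ⟨m, hm, hℓm⟩ := hh ℓ hℓ
    obtain ⟨k, hk, hmk⟩ := hg m hm
    refine ⟨k, hk, ?_⟩
    rw [Equiv.Perm.coe_mul, ← List.map_map]
    exact List.Subset.trans (List.map_subset g hℓm) hmk

/-- The permutations of a finite set of points that map lines of `L` into lines of `L`. Finiteness
makes this set closed under inversion. -/
def collineationGroup [Finite α] : Subgroup (Equiv.Perm α) where
  toSubmonoid := lineMaps L
  inv_mem' {g} hg := Submonoid.powers_le.mpr hg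
    (mem_powers_iff_mem_zpowers.mpr (inv_mem (Subgroup.mem_zpowers g)))

variable {L} [Finite α] {g : Equiv.Perm α} {H : Subgroup (Equiv.Perm α)}

theorem exists_line_apply (hg : g ∈ collineationGroup L) {p q : α}
    (hpq : ∃ ℓ ∈ L, p ∈ ℓ ∧ q ∈ ℓ) : ∃ ℓ ∈ L, g p ∈ ℓ ∧ g q ∈ ℓ := by
  obtain ⟨ℓ, hℓ, hp, hq⟩ := hpq
  obtain ⟨m, hm, hℓm⟩ := hg ℓ hℓ
  exact ⟨m, hm, hℓm (List.mem_map_of_mem hp), hℓm (List.mem_map_of_mem hq)⟩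

theorem exists_line_apply_iff (hg : g ∈ collineationGroup L) {p q : α} :
    (∃ ℓ ∈ L, g p ∈ ℓ ∧ g q ∈ ℓ) ↔ ∃ ℓ ∈ L, p ∈ ℓ ∧ q ∈ ℓ :=
  ⟨fun h ↦ by simpa using exists_line_apply (inv_mem hg) h, exists_line_apply hg⟩

variable [DecidableEq α]

/-- The lines of `L` on the point `p`. -/
def linesThrough (L : List (List α)) (p : α) : List (List α) := L.filter (p ∈ ·)

/-- The distance of two points in the collinearity graph of the lines `L`, where `3` stands for
every distance that exceeds `2`. -/
def lineDist (L : List (List α)) (p q : α) : ℕ :=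
  if p = q then 0
  else if ∃ ℓ ∈ linesThrough L p, q ∈ ℓ then 1
  else if ∃ ℓ ∈ linesThrough L p, ∃ m ∈ linesThrough L q, ∃ r ∈ ℓ, r ∈ m then 2
  else 3

/-- The distances of `p` from the points of `F`. -/
def signature (L : List (List α)) (F : List α) (p : α) : List ℕ := F.map (lineDist L · p)

theorem lineDist_apply (hg : g ∈ collineationGroup L) (p q : α) :
    lineDist L (g p) (g q) = lineDist L p q := by
  have hone (p q : α) : (∃ ℓ ∈ linesThrough L p, q ∈ ℓ) ↔ ∃ ℓ ∈ L, p ∈ ℓ ∧ q ∈ ℓ := by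
    simp [linesThrough, and_assoc]
  have htwo (p q : α) : (∃ ℓ ∈ linesThrough L p, ∃ m ∈ linesThrough L q, ∃ r ∈ ℓ, r ∈ m) ↔
      ∃ r, (∃ ℓ ∈ L, p ∈ ℓ ∧ r ∈ ℓ) ∧ ∃ m ∈ L, q ∈ m ∧ r ∈ m := by
    simp only [linesThrough, List.mem_filter, decide_eq_true_eq]
    grind
  unfold lineDist
  refine if_congr g.injective.eq_iff rfl (if_congr ?_ rfl (if_congr ?_ rfl rfl))
  · rw [hone, hone, exists_line_apply_iff hg]
  · rw [htwo, htwo, g.surjective.exists]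
    simp only [exists_line_apply_iff hg]

theorem lineDist_conj_apply (hg : g ∈ collineationGroup L) (f : Equiv.Perm α) (p : α) :
    lineDist L p ((g * f * g⁻¹) p) = lineDist L (g⁻¹ p) (f (g⁻¹ p)) := by
  rw [← lineDist_apply hg (g⁻¹ p)]
  simp

theorem signature_apply (hg : g ∈ collineationGroup L) {F : List α} (hF : ∀ p ∈ F, g p = p)
    (q : α) : signature L F (g q) = signature L F q :=
  List.map_congr_left fun p hp ↦ by simpa only [hF p hp] using lineDist_apply hg p q

theorem card_pointwiseStabilizer_eq_ncard_signature_mul (hH : H ≤ collineationGroup L)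
    {F : List α} {b : α} (hreach : ∀ q, signature L F q = signature L F b →
      ∃ g ∈ pointwiseStabilizer H F, g b = q) :
    Nat.card (pointwiseStabilizer H F) = {q | signature L F q = signature L F b}.ncard *
      Nat.card (pointwiseStabilizer H (b :: F)) := by
  have horbit : {q | ∃ g ∈ pointwiseStabilizer H F, g b = q} =
      {q | signature L F q = signature L F b} := by
    refine Set.ext fun q ↦ ⟨?_, hreach q⟩
    rintro ⟨g, hg, rfl⟩
    exact signature_apply (hH hg.1) (mem_pointwiseStabilizer.mp hg).2 b
  rw [card_pointwiseStabilizer_eq_ncard_mul H F b, horbit]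

end Geometry

section Hexagon

/-- The images of `0, …, 62` under `x`, where `0` is the point labelled `63`. Looking up an image is
much faster than evaluating a product of cycles. -/
def xImages : List (Fin 63) :=
  [35, 43, 1, 17, 29, 38, 13, 9, 61, 15, 33, 14, 26, 36, 45, 56, 40, 24, 51, 37, 55, 20, 46, 32,
   21, 8, 52, 4, 42, 62, 54, 39, 48, 59, 28, 2, 47, 10, 23, 0, 57, 12, 7, 31, 19, 27, 58, 25, 18,
   41, 22, 5, 30, 3, 49, 53, 34, 50, 16, 60, 44, 6, 11]

/-- The images of `0, …, 62` under `y`. -/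
def yImages : List (Fin 63) :=
  [34, 1, 53, 9, 38, 29, 51, 7, 25, 3, 19, 20, 44, 43, 21, 15, 40, 32, 39, 10, 11, 14, 62, 30,
   26, 8, 24, 59, 28, 5, 23, 31, 17, 54, 0, 56, 55, 37, 4, 18, 16, 49, 48, 13, 12, 60, 61, 50,
   42, 41, 47, 6, 52, 2, 33, 36, 35, 58, 57, 27, 45, 46, 22]

/-- The permutation `x` as a lookup table; its inverse is the sixth power. -/
def xTable : Equiv.Perm (Fin 63) where
  toFun p := xImages.getD p 0
  invFun := (fun p : Fin 63 ↦ xImages.getD p 0)^[6]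
  left_inv := by unfold Function.LeftInverse; decide +kernel
  right_inv := by unfold Function.RightInverse Function.LeftInverse; decide +kernel

/-- The involution `y` as a lookup table. -/
def yTable : Equiv.Perm (Fin 63) where
  toFun p := yImages.getD p 0
  invFun p := yImages.getD p 0
  left_inv := by unfold Function.LeftInverse; decide +kernel
  right_inv := by unfold Function.RightInverse Function.LeftInverse; decide +kernel

theorem x_eq_table : x = xTable := by
  ext1 p; revert p; decide +kernel

theorem y_eq_table : y = yTable := by
  ext1 p; revert p; decide +kernel

theorem y_mul_self : y * y = 1 := by
  simp only [y_eq_table]; decide +kernel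

theorem x_pow_seven : x ^ 7 = 1 := by
  simp only [x_eq_table]; decide +kernel

/-- The group `⟨x, y⟩`, which is the automorphism group of `PSU(3,3)`. -/
abbrev hexGroup : Subgroup (Equiv.Perm (Fin 63)) := Subgroup.closure {x, y}

/-- The conjugate of `x` by `y`. -/
def xConj : Equiv.Perm (Fin 63) := y * x * y⁻¹

/-- The subgroup generated by `x` and its conjugate by `y`, which turns out to be the simple normal
subgroup `PSU(3,3)` of `hexGroup`. -/
abbrev socle : Subgroup (Equiv.Perm (Fin 63)) := Subgroup.closure {x, xConj}

theorem x_mem_socle : x ∈ socle := Subgroup.subset_closure (by simp)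

theorem xConj_mem_socle : xConj ∈ socle := Subgroup.subset_closure (by simp)

theorem x_mem_hexGroup : x ∈ hexGroup := Subgroup.subset_closure (by simp)

theorem y_mem_hexGroup : y ∈ hexGroup := Subgroup.subset_closure (by simp)

theorem socle_le_hexGroup : socle ≤ hexGroup := by
  refine (Subgroup.closure_le _).mpr ?_
  rintro _ (rfl | rfl)
  · exact x_mem_hexGroup
  · exact mul_mem (mul_mem y_mem_hexGroup x_mem_hexGroup) (inv_mem y_mem_hexGroup)

/-- An element of order `4` of the stabilizer of the point `7`. -/
def sigma : Equiv.Perm (Fin 63) := xConj ^ 2 * x ^ 5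

/-- An element of order `3` of the stabilizer of the points `7` and `4`. -/
def rho : Equiv.Perm (Fin 63) := xConj ^ 3 * x ^ 4 * xConj ^ 2 * x ^ 3

/-- The involution that fixes the points `7`, `4` and `28`. -/
def tau : Equiv.Perm (Fin 63) := xConj ^ 3 * x ^ 4 * xConj ^ 3 * x ^ 4

theorem sigma_mem_socle : sigma ∈ socle :=
  mul_mem (pow_mem xConj_mem_socle 2) (pow_mem x_mem_socle 5)

theorem rho_mem_socle : rho ∈ socle :=
  mul_mem (mul_mem (mul_mem (pow_mem xConj_mem_socle 3) (pow_mem x_mem_socle 4))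
    (pow_mem xConj_mem_socle 2)) (pow_mem x_mem_socle 3)

theorem tau_mem_socle : tau ∈ socle :=
  mul_mem (mul_mem (mul_mem (pow_mem xConj_mem_socle 3) (pow_mem x_mem_socle 4))
    (pow_mem xConj_mem_socle 3)) (pow_mem x_mem_socle 4)

theorem sigma_apply_seven : sigma 7 = 7 := by
  simp only [sigma, xConj, x_eq_table, y_eq_table]; decide +kernel

theorem rho_apply_eq_self : ∀ p ∈ [4, 7], rho p = p := by
  simp only [rho, xConj, x_eq_table, y_eq_table]; decide +kernel

theorem tau_apply_eq_self : ∀ p ∈ [28, 4, 7], tau p = p := by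
  simp only [tau, xConj, x_eq_table, y_eq_table]; decide +kernel

theorem isPreprimitive_of_socle_le {H : Subgroup (Equiv.Perm (Fin 63))} (hH : socle ≤ H) :
    MulAction.IsPreprimitive H (Fin 63) := by
  set K := Subgroup.closure {sigma, rho}
  have hsigma : sigma ∈ K := Subgroup.subset_closure (by simp)
  have hrho : rho ∈ K := Subgroup.subset_closure (by simp)
  have hKsocle : K ≤ socle :=
    (Subgroup.closure_le _).mpr (Set.pair_subset sigma_mem_socle rho_mem_socle)
  have hKfix : K ≤ stabilizer (Equiv.Perm (Fin 63)) (7 : Fin 63) :=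
    (Subgroup.closure_le _).mpr (Set.pair_subset sigma_apply_seven (rho_apply_eq_self 7 (by simp)))
  refine isPreprimitive_of_prime_order (p := 7) (by norm_num) x_pow_seven (hH x_mem_socle)
    (hKsocle.trans hH) hKfix (fun q hq ↦ ?_) fun q ↦ ?_
  · have hreach : ∀ q ≠ 7, q ∈ reach [sigma, rho] 200
        ((List.range 7).tail.map fun k ↦ (x ^ k) 7) [] := by
      simp only [sigma, rho, xConj, x_eq_table, y_eq_table]; decide +kernel
    obtain ⟨b, hb, s, hs, hsb⟩ :=
      exists_apply_eq_of_mem_reach (H := K) (by simp [hsigma, hrho]) (hreach q hq)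
    obtain ⟨k, -, rfl⟩ := List.mem_map.mp hb
    exact ⟨k, s, hs, hsb⟩
  · have hreach : ∀ q, q ∈ reach [x, sigma, rho] 200 [7] [] := by
      simp only [sigma, rho, xConj, x_eq_table, y_eq_table]; decide +kernel
    obtain ⟨b, hb, h, hh, hhb⟩ :=
      exists_apply_eq_of_mem_reach (H := K ⊔ Subgroup.zpowers x)
        (by simp [Subgroup.mem_sup_left, Subgroup.mem_sup_right, hsigma, hrho]) (hreach q)
    obtain rfl := List.mem_singleton.mp hb
    exact ⟨h, hh, hhb⟩

/-- The lines of a generalized hexagon of order `(2, 2)` on the 63 points that is invariant under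
`x` and `y`. -/
def hexLines : List (List (Fin 63)) :=
  [[0, 15, 34], [0, 45, 49], [0, 48, 53], [1, 5, 24], [1, 7, 28], [1, 26, 29], [2, 4, 12],
   [2, 17, 51], [2, 34, 42], [3, 13, 48], [3, 18, 35], [3, 19, 23], [4, 11, 25], [4, 13, 14],
   [5, 21, 25], [5, 55, 60], [6, 11, 27], [6, 26, 50], [6, 32, 53], [7, 15, 31], [7, 37, 52],
   [8, 14, 29], [8, 20, 38], [8, 40, 41], [9, 10, 30], [9, 39, 56], [9, 42, 43], [10, 24, 48],
   [10, 40, 57], [11, 30, 31], [12, 28, 44], [12, 57, 61], [13, 22, 52], [14, 39, 54],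
   [15, 33, 54], [16, 19, 58], [16, 25, 49], [16, 37, 40], [17, 18, 36], [17, 32, 37],
   [18, 21, 33], [19, 26, 42], [20, 23, 31], [20, 51, 59], [21, 38, 43], [22, 46, 60],
   [22, 50, 59], [23, 55, 61], [24, 47, 51], [27, 35, 41], [27, 47, 62], [28, 35, 56],
   [29, 36, 45], [30, 36, 46], [32, 39, 55], [33, 50, 57], [34, 41, 60], [38, 44, 53],
   [43, 52, 62], [44, 46, 58], [45, 61, 62], [47, 54, 58], [49, 56, 59]]

theorem hexGroup_le_collineationGroup : hexGroup ≤ collineationGroup hexLines := by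
  refine (Subgroup.closure_le _).mpr (Set.pair_subset ?_ ?_)
  · change ∀ ℓ ∈ hexLines, ∃ m ∈ hexLines, ℓ.map x ⊆ m
    simp only [x_eq_table]; decide +kernel
  · change ∀ ℓ ∈ hexLines, ∃ m ∈ hexLines, ℓ.map y ⊆ m
    simp only [y_eq_table]; decide +kernel

/-- The points `7, 4, 28, 31`, whose pointwise stabilizer in `hexGroup` is trivial. -/
def base : List (Fin 63) := [31, 28, 4, 7]

theorem pointwiseStabilizer_base : pointwiseStabilizer hexGroup base = ⊥ := by
  refine (Subgroup.eq_bot_iff_forall _).mpr fun g hg ↦ ?_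
  obtain ⟨hgG, hbase⟩ := mem_pointwiseStabilizer.mp hg
  have hcol := hexGroup_le_collineationGroup hgG
  -- The distances from the base determine the points `2` and `11`, and the distances from these
  -- six points determine every point.
  have hdet : ∀ p ∈ [2, 11], ∀ q,
      signature hexLines base q = signature hexLines base p → q = p := by
    decide +kernel
  have hfix : ∀ p ∈ [2, 11] ++ base, g p = p := fun p hp ↦ by
    obtain hp | hp := List.mem_append.mp hp
    · exact hdet p hp _ (signature_apply hcol hbase p)
    · exact hbase p hp
  have hinj : Function.Injective (signature hexLines ([2, 11] ++ base)) := by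
    have hnodup : ((List.finRange 63).map (signature hexLines ([2, 11] ++ base))).Nodup := by
      decide +kernel
    exact fun p q hpq ↦ List.inj_on_of_nodup_map hnodup (List.mem_finRange p)
      (List.mem_finRange q) hpq
  exact Equiv.Perm.ext fun p ↦ hinj (signature_apply hcol hfix p)

theorem sigma_mem_hexGroup : sigma ∈ hexGroup := socle_le_hexGroup sigma_mem_socle

theorem rho_mem_hexGroup : rho ∈ hexGroup := socle_le_hexGroup rho_mem_socle

theorem card_pointwiseStabilizer_hexGroup {F : List (Fin 63)} {b : Fin 63}
    {gens : List (Equiv.Perm (Fin 63))} (hgens : ∀ g ∈ gens, g ∈ pointwiseStabilizer hexGroup F)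
    (hreach : ∀ q, signature hexLines F q = signature hexLines F b → q ∈ reach gens 200 [b] [])
    {n : ℕ} (hn : (Finset.univ.filter
      fun q ↦ signature hexLines F q = signature hexLines F b).card = n) :
    Nat.card (pointwiseStabilizer hexGroup F) =
      n * Nat.card (pointwiseStabilizer hexGroup (b :: F)) := by
  rw [card_pointwiseStabilizer_eq_ncard_signature_mul hexGroup_le_collineationGroup (b := b),
    ← Finset.coe_filter_univ, Set.ncard_coe_finset, hn]
  intro q hq
  obtain ⟨_, hb, g, hg, hgb⟩ := exists_apply_eq_of_mem_reach hgens (hreach q hq)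
  rw [List.mem_singleton.mp hb] at hgb
  exact ⟨g, hg, hgb⟩

theorem card_pointwiseStabilizer_hexGroup_nil : Nat.card (pointwiseStabilizer hexGroup []) =
    63 * Nat.card (pointwiseStabilizer hexGroup [7]) :=
  card_pointwiseStabilizer_hexGroup (gens := [x, sigma, rho])
    (by simp [mem_pointwiseStabilizer, x_mem_hexGroup, sigma_mem_hexGroup, rho_mem_hexGroup])
    (by simp only [sigma, rho, xConj, x_eq_table, y_eq_table]; decide +kernel) (by decide +kernel)

theorem y_apply_seven : y 7 = 7 := by
  simp only [y_eq_table]; decide +kernel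

theorem card_pointwiseStabilizer_hexGroup_seven : Nat.card (pointwiseStabilizer hexGroup [7]) =
    32 * Nat.card (pointwiseStabilizer hexGroup [4, 7]) :=
  card_pointwiseStabilizer_hexGroup (gens := [y, sigma, rho])
    (by simp [mem_pointwiseStabilizer, y_mem_hexGroup, y_apply_seven, sigma_mem_hexGroup,
      sigma_apply_seven, rho_mem_hexGroup, rho_apply_eq_self])
    (by simp only [sigma, rho, xConj, x_eq_table, y_eq_table]; decide +kernel) (by decide +kernel)

theorem card_pointwiseStabilizer_hexGroup_four_seven :
    Nat.card (pointwiseStabilizer hexGroup [4, 7]) =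
      3 * Nat.card (pointwiseStabilizer hexGroup [28, 4, 7]) :=
  card_pointwiseStabilizer_hexGroup (gens := [rho])
    (by simp [mem_pointwiseStabilizer, rho_mem_hexGroup, rho_apply_eq_self])
    (by simp only [rho, xConj, x_eq_table, y_eq_table]; decide +kernel) (by decide +kernel)

theorem card_pointwiseStabilizer_hexGroup_twentyEight_four_seven :
    Nat.card (pointwiseStabilizer hexGroup [28, 4, 7]) =
      2 * Nat.card (pointwiseStabilizer hexGroup base) :=
  card_pointwiseStabilizer_hexGroup (gens := [tau])
    (by simp [mem_pointwiseStabilizer, socle_le_hexGroup tau_mem_socle, tau_apply_eq_self])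
    (by simp only [tau, xConj, x_eq_table, y_eq_table]; decide +kernel) (by decide +kernel)

theorem card_hexGroup : Nat.card hexGroup = 12096 := by
  have hnil : pointwiseStabilizer hexGroup [] = hexGroup := by
    ext g; simp [mem_pointwiseStabilizer]
  rw [← hnil, card_pointwiseStabilizer_hexGroup_nil, card_pointwiseStabilizer_hexGroup_seven,
    card_pointwiseStabilizer_hexGroup_four_seven,
    card_pointwiseStabilizer_hexGroup_twentyEight_four_seven, pointwiseStabilizer_base,
    Subgroup.card_bot]

theorem eq_of_eqOn_base {g h : Equiv.Perm (Fin 63)} (hg : g ∈ hexGroup) (hh : h ∈ hexGroup)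
    (hgh : ∀ p ∈ base, g p = h p) : g = h := by
  have hmem : h⁻¹ * g ∈ pointwiseStabilizer hexGroup base :=
    mem_pointwiseStabilizer.mpr ⟨mul_mem (inv_mem hh) hg, fun p hp ↦ by simp [hgh p hp]⟩
  rw [pointwiseStabilizer_base, Subgroup.mem_bot] at hmem
  exact (inv_mul_eq_one.mp hmem).symm

theorem hexGroup_ne_top : hexGroup ≠ ⊤ := by
  intro htop
  have hcard := card_hexGroup
  rw [htop, Subgroup.card_top, Nat.card_perm, Nat.card_fin] at hcard
  exact absurd hcard (by decide +kernel)

theorem hexGroup_ne_alternatingGroup : hexGroup ≠ alternatingGroup (Fin 63) := by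
  intro halt
  have hcard := two_mul_nat_card_alternatingGroup (α := Fin 63)
  rw [← halt, card_hexGroup, Nat.card_perm, Nat.card_fin] at hcard
  exact absurd hcard (by decide +kernel)

theorem not_commute_x_xConj : ¬ Commute x xConj := by
  have hne : x * xConj ≠ xConj * x := by
    simp only [xConj, x_eq_table, y_eq_table]; decide +kernel
  exact hne

theorem isSimpleGroup_socle : IsSimpleGroup socle := by
  have hprim := isPreprimitive_of_socle_le le_rfl
  have hcard : ¬ 7 * 7 ∣ Nat.card socle := fun hdvd ↦ by
    have := hdvd.trans (Subgroup.card_dvd_of_le socle_le_hexGroup)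
    rw [card_hexGroup] at this
    omega
  have : Nontrivial socle := (Subgroup.nontrivial_iff_exists_ne_one _).mpr
    ⟨x, x_mem_socle, fun hx ↦ not_commute_x_xConj (hx ▸ Commute.one_left _)⟩
  refine isSimpleGroup_of_closure_pow_prime_eq_one (X := Fin 63) (p := 7) (by norm_num)
    (by norm_num) hcard Subgroup.closure_closure_coe_preimage ?_
  rintro ⟨_, _⟩ (rfl | rfl)
  · exact Subtype.ext x_pow_seven
  · exact Subtype.ext (by simp [xConj, conj_pow, x_pow_seven])

theorem exists_isSimpleGroup_normal_hexGroup :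
    ∃ S : Subgroup hexGroup, S.Normal ∧ IsSimpleGroup S ∧ (∃ a b : S, a * b ≠ b * a) ∧
      Subgroup.centralizer (S : Set hexGroup) = ⊥ := by
  have hprim := isPreprimitive_of_socle_le socle_le_hexGroup
  have hcard : ¬ 7 * 7 ∣ Nat.card hexGroup := by rw [card_hexGroup]; omega
  exact exists_isSimpleGroup_normal_centralizer_eq_bot (X := Fin 63) (p := 7) socle_le_hexGroup
    (closure_pair_le_normalizer_closure_conj y_mul_self) isSimpleGroup_socle (by norm_num)
    (by norm_num) hcard x_mem_socle xConj_mem_socle x_pow_seven not_commute_x_xConj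

theorem cycleType_x : x.cycleType = Multiset.replicate 9 7 := by
  rw [x, cycleType_permOfCycles] <;> decide +kernel

theorem cycleType_y : y.cycleType = Multiset.replicate 28 2 := by
  rw [y, cycleType_permOfCycles] <;> decide +kernel

theorem x_mul_y_eq_permOfCycles : x * y = permOfCycles [
    [0, 28, 42, 18], [1, 43, 36, 53], [2, 3, 15, 56], [4, 23, 54, 59], [5, 62, 46, 6],
    [7, 9, 17, 48], [10, 37], [11, 55, 47, 22], [12, 19, 33, 49], [13, 31, 39, 51], [14, 20],
    [16, 57], [21, 45, 44, 26], [24, 52, 30, 32], [25, 61, 58, 50], [27, 60], [29, 38],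
    [34, 35]] := by
  rw [x_eq_table, y_eq_table]
  ext1 p; revert p; decide +kernel

theorem cycleType_x_mul_y :
    (x * y).cycleType = Multiset.replicate 12 4 + Multiset.replicate 6 2 := by
  rw [x_mul_y_eq_permOfCycles, cycleType_permOfCycles] <;> decide +kernel

theorem permInd_sum : permInd x + permInd y + permInd (x * y)⁻¹ = 2 * (63 - 1) := by
  rw [permInd_eq_of_cycleType_eq cycleType_x, permInd_eq_of_cycleType_eq cycleType_y,
    permInd_eq_of_cycleType_eq ((Equiv.Perm.cycleType_inv _).trans cycleType_x_mul_y)]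
  simp

theorem orderOf_x : orderOf x = 7 := by
  rw [← Equiv.Perm.lcm_cycleType, cycleType_x]; decide

theorem orderOf_y : orderOf y = 2 := by
  rw [← Equiv.Perm.lcm_cycleType, cycleType_y]; decide

theorem orderOf_x_mul_y : orderOf (x * y) = 4 := by
  rw [← Equiv.Perm.lcm_cycleType, cycleType_x_mul_y]; decide

/-- The product of the elements `y * x ^ a` for `a` in the list. -/
def word (l : List ℕ) : Equiv.Perm (Fin 63) := (l.map (y * x ^ ·)).prod

theorem word_mem_hexGroup (l : List ℕ) : word l ∈ hexGroup := by
  refine Subgroup.list_prod_mem _ fun g hg ↦ ?_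
  obtain ⟨a, -, rfl⟩ := List.mem_map.mp hg
  exact mul_mem y_mem_hexGroup (pow_mem x_mem_hexGroup a)

theorem isRationalIn_x : IsRationalIn hexGroup x := by
  have hconj : word [5, 4, 2, 6, 5, 2, 0] * x = x ^ 3 * word [5, 4, 2, 6, 5, 2, 0] := by
    simp only [word, x_eq_table, y_eq_table]; decide +kernel
  exact isRationalIn_of_conj_eq_pow orderOf_x (word_mem_hexGroup _)
    (mul_inv_eq_of_eq_mul hconj) (by decide)

theorem isRationalIn_y : IsRationalIn hexGroup y :=
  isRationalIn_of_conj_eq_pow (h := 1) (r := 1) orderOf_y (one_mem _) (by simp) (by decide)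

theorem isRationalIn_x_mul_y_inv : IsRationalIn hexGroup (x * y)⁻¹ := by
  have hconj : word [1, 2, 2, 1] * (x * y)⁻¹ = (x * y)⁻¹ ^ 3 * word [1, 2, 2, 1] := by
    simp only [word, x_eq_table, y_eq_table]; decide +kernel
  exact isRationalIn_of_conj_eq_pow ((orderOf_inv _).trans orderOf_x_mul_y)
    (word_mem_hexGroup _) (mul_inv_eq_of_eq_mul hconj) (by decide)

theorem lineDist_seven_inv_apply {k : Equiv.Perm (Fin 63)}
    (hk : k ∈ pointwiseStabilizer hexGroup [7]) (p : Fin 63) :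
    lineDist hexLines 7 (k⁻¹ p) = lineDist hexLines 7 p := by
  obtain ⟨hkG, hk7⟩ := mem_pointwiseStabilizer.mp (inv_mem hk)
  simpa only [hk7 7 (by simp)] using lineDist_apply (hexGroup_le_collineationGroup hkG) 7 p

theorem conj_y_apply_eq_self {k : Equiv.Perm (Fin 63)} (hk : k ∈ pointwiseStabilizer hexGroup [7])
    {p : Fin 63} (hp : lineDist hexLines 7 p ≤ 1) : (k * y * k⁻¹) p = p := by
  have hy : ∀ p, lineDist hexLines 7 p ≤ 1 → y p = p := by
    simp only [y_eq_table]; decide +kernel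
  rw [Equiv.Perm.mul_apply, Equiv.Perm.mul_apply,
    hy _ ((lineDist_seven_inv_apply hk p).trans_le hp), Equiv.Perm.coe_inv, Equiv.apply_symm_apply]

theorem lineDist_conj_y_apply {k : Equiv.Perm (Fin 63)} (hk : k ∈ pointwiseStabilizer hexGroup [7])
    {p : Fin 63} (hp : lineDist hexLines 7 p = 3) : lineDist hexLines p ((k * y * k⁻¹) p) = 3 := by
  have hy : ∀ p, lineDist hexLines 7 p = 3 → lineDist hexLines p (y p) = 3 := by
    simp only [y_eq_table]; decide +kernel
  rw [lineDist_conj_apply (hexGroup_le_collineationGroup hk.1)]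
  exact hy _ ((lineDist_seven_inv_apply hk p).trans hp)

/-- Words for the conjugates of `y` in `hexGroup` that fix every point collinear with `7`. -/
def elationWords : List (List ℕ) := [[0], [0, 5, 2, 5, 2], [0, 2, 5, 2, 5], [0, 2, 3, 4, 3, 2, 0]]

theorem exists_mem_elationWords_conj_y_eq {k : Equiv.Perm (Fin 63)}
    (hk : k ∈ pointwiseStabilizer hexGroup [7]) : ∃ u ∈ elationWords, k * y * k⁻¹ = word u := by
  have hconj : k * y * k⁻¹ ∈ hexGroup := mul_mem (mul_mem hk.1 y_mem_hexGroup) (inv_mem hk.1)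
  have hnear : ∀ p ∈ [1, 15, 28, 31, 37, 52], lineDist hexLines 7 p ≤ 1 := by decide +kernel
  have hfour : ∀ q, signature hexLines [1, 15, 28, 31, 37, 52] q =
      signature hexLines [1, 15, 28, 31, 37, 52] 4 → lineDist hexLines 4 q = 3 →
      ∃ u ∈ elationWords, word u 4 = q := by
    simp only [word, x_eq_table, y_eq_table]; decide +kernel
  have hbase : ∀ u ∈ elationWords, ∀ p ∈ base,
      p = 4 ∨ lineDist hexLines 7 p ≤ 1 ∧ word u p = p := by
    simp only [word, x_eq_table, y_eq_table]; decide +kernel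
  have hsig := signature_apply (hexGroup_le_collineationGroup hconj)
    (fun p hp ↦ conj_y_apply_eq_self hk (hnear p hp)) 4
  obtain ⟨u, hu, heq⟩ := hfour _ hsig (lineDist_conj_y_apply hk (by decide +kernel))
  refine ⟨u, hu, eq_of_eqOn_base hconj (word_mem_hexGroup u) fun p hp ↦ ?_⟩
  obtain rfl | ⟨hp7, hup⟩ := hbase u hu p hp
  · exact heq.symm
  · rw [conj_y_apply_eq_self hk hp7, hup]

/-- Words for elements that map the point `7` into each orbit of `x`. -/
def orbitWords : List (List ℕ) :=
  [[], [1], [3], [6], [2, 1], [3, 1], [5, 1], [1, 3, 1], [1, 5, 1]]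

theorem exists_mem_orbitWords_apply_seven_eq (p : Fin 63) :
    ∃ i < 7, ∃ h ∈ orbitWords, (x ^ i * word h) 7 = p := by
  revert p
  simp only [word, x_eq_table, y_eq_table]; decide +kernel

theorem conj_word_eq_y_of_orderOf_eq_four {h u : List ℕ} (hh : h ∈ orbitWords)
    (hu : u ∈ elationWords) (horder : orderOf (x * (word h * word u * (word h)⁻¹)) = 4) :
    word h * word u * (word h)⁻¹ = y := by
  have hcheck : ∀ h ∈ orbitWords, ∀ u ∈ elationWords,
      (∀ p ∈ base, (word h * word u * (word h)⁻¹) p = y p) ∨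
      (∃ p ∈ base, ((x * (word h * word u * (word h)⁻¹)) ^ 4) p ≠ p) ∨
      ∀ p ∈ base, ((x * (word h * word u * (word h)⁻¹)) ^ 2) p = p := by
    simp only [word, x_eq_table, y_eq_table]; decide +kernel
  have hconj : word h * word u * (word h)⁻¹ ∈ hexGroup :=
    mul_mem (mul_mem (word_mem_hexGroup h) (word_mem_hexGroup u)) (inv_mem (word_mem_hexGroup h))
  obtain heq | ⟨p, -, hp⟩ | hsq := hcheck h hh u hu
  · exact eq_of_eqOn_base hconj y_mem_hexGroup heq
  · rw [← horder, pow_orderOf_eq_one] at hp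
    exact absurd rfl hp
  · have hdvd := orderOf_dvd_of_pow_eq_one (eq_of_eqOn_base
      (pow_mem (mul_mem x_mem_hexGroup hconj) 2) (one_mem _) hsq)
    rw [horder] at hdvd
    omega

theorem exists_commute_x_conj_y_eq {g : Equiv.Perm (Fin 63)} (hg : g ∈ hexGroup)
    (horder : orderOf (x * (g * y * g⁻¹)) = orderOf (x * y)) :
    ∃ e ∈ hexGroup, Commute e x ∧ g * y * g⁻¹ = e * y * e⁻¹ := by
  obtain ⟨i, -, h, hh, hg7⟩ := exists_mem_orbitWords_apply_seven_eq (g 7)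
  have hk : (x ^ i * word h)⁻¹ * g ∈ pointwiseStabilizer hexGroup [7] := by
    refine mem_pointwiseStabilizer.mpr ⟨mul_mem (inv_mem (mul_mem (pow_mem x_mem_hexGroup i)
      (word_mem_hexGroup h))) hg, fun p hp ↦ ?_⟩
    rw [List.mem_singleton.mp hp, Equiv.Perm.mul_apply, ← hg7, Equiv.Perm.coe_inv,
      Equiv.symm_apply_apply]
  obtain ⟨u, hu, hku⟩ := exists_mem_elationWords_conj_y_eq hk
  have hgy : g * y * g⁻¹ = x ^ i * (word h * word u * (word h)⁻¹) * (x ^ i)⁻¹ := by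
    rw [← hku]; group
  have hconj : x * (g * y * g⁻¹) =
      MulAut.conj (x ^ i) (x * (word h * word u * (word h)⁻¹)) := by
    rw [hgy, MulAut.conj_apply]; group
  rw [hconj, MulEquiv.orderOf_eq, orderOf_x_mul_y] at horder
  refine ⟨x ^ i, pow_mem x_mem_hexGroup i, (Commute.refl x).pow_left i, ?_⟩
  rw [hgy, conj_word_eq_y_of_orderOf_eq_four hh hu horder]

theorem isNice_x_y : IsNice x y (x * y)⁻¹ := by
  have hprim := isPreprimitive_of_socle_le socle_le_hexGroup
  refine ⟨mul_inv_cancel _, ⟨hexGroup_ne_alternatingGroup, hexGroup_ne_top⟩,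
    ⟨hprim.toIsPretransitive, fun B hB ↦ hprim.isTrivialBlock_of_isBlock hB⟩,
    exists_isSimpleGroup_normal_hexGroup, permInd_sum, fun x' y' z' hprod _ ↦ ?_, ?_⟩
  · exact exists_simultaneous_conj (fun g hg ↦ exists_commute_x_conj_y_eq hg) hprod
  · rintro g (rfl | rfl | rfl)
    exacts [isRationalIn_x, isRationalIn_y, isRationalIn_x_mul_y_inv]

end Hexagon

end HexagonTriple

theorem nice_triple_deg63_stmt6 :
    IsNice x y (x * y)⁻¹ ∧
    x.cycleType = Multiset.replicate 9 7 ∧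
    y.cycleType = Multiset.replicate 28 2 ∧
    ((x * y)⁻¹).cycleType = Multiset.replicate 12 4 + Multiset.replicate 6 2 ∧
    Nat.card ↥(Subgroup.closure {x, y} : Subgroup (Equiv.Perm (Fin 63))) = 12096 :=
  ⟨HexagonTriple.isNice_x_y, HexagonTriple.cycleType_x, HexagonTriple.cycleType_y,
    (Equiv.Perm.cycleType_inv _).trans HexagonTriple.cycleType_x_mul_y,
    HexagonTriple.card_hexGroup⟩
end

section
/- With p, q ∈ ℚ[X] as in the context (the Belyi map of degree 77 for Aut(M_22)), the polynomial F = p − t·q ∈ K[X] has degree 77, is irreducible over K = ℚ(t), and its Galois group Polynomial.Gal F (the Galois group of the splitting field of F over K) has cardinality 887040, the order of Aut(M_22). -/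
open Polynomial

noncomputable section

def p : Polynomial ℚ :=
    2 ^ 22 * (X ^ 2 + X + 3) ^ 11 * (X ^ 5 - 3 * X ^ 4 - 14 * X ^ 3 + 15 * X ^ 2 + X - 1) ^ 11

def r : Polynomial ℚ :=
    -11 ^ 4 * (X ^ 4 + 2 * X ^ 3 + 7 * X ^ 2 - 16 * X - 2) ^ 4 * (X ^ 6 + 14 * X ^ 5 + 34 * X
    ^ 4 + 8 * X ^ 3 - 30 * X ^ 2 + 60 * X + 16) ^ 4 * (4 * X ^ 6 + X ^ 5 + 15 * X ^ 4 + 10 * X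
    ^ 3 - 10 * X ^ 2 - 2 * X - 2) ^ 4 * (16 * X ^ 6 - 29 * X ^ 5 + 71 * X ^ 4 - 136 * X ^ 3 +
    92 * X ^ 2 - 8 * X - 8) ^ 2

def q : Polynomial ℚ := p - r

/-- `F = p − t·q ∈ K[X]` where `K = ℚ(t)` and `t = RatFunc.X`. -/
def F : Polynomial (RatFunc ℚ) :=
  p.map (algebraMap ℚ (RatFunc ℚ)) - Polynomial.C RatFunc.X * q.map (algebraMap ℚ (RatFunc ℚ))

end

/-!
Put `s = t / (2²² (1 - t))`. Up to a constant, `F` is the equation `P¹¹ - s Q² = 0` of the generic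
fibre of the Belyi map, where `p = 2²² P¹¹` and `r = -Q²`. It is linear in `s` with coprime
coefficients, hence irreducible.

The fibre product of the map with itself splits off, besides the diagonal, a symmetric
correspondence `g(x, y) = 0` of bidegree `(16, 16)`. It makes the 77 roots into a graph preserved
by the Galois group `G`, the disjointness graph of the hexads of the Steiner system `S(3, 6, 22)`.
At a regular value `s₀ ∈ 𝔽_ℓ`, reduction is an isomorphism from this graph to the one on the fibre
over `s₀`, and Frobenius lifts to an element of `G`. A totally split fibre over `𝔽₅₂₇₃` identifies
the graph, and Frobenius elements at smaller primes show that `G` has a chain of pointwise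
stabilizers with orbit lengths `77, 16, 15, 3, 2, 2, 2, 2`; the eight hexads of the chain have
trivial common stabilizer, since every other hexad is pinned down, in two rounds, by its adjacencies
to hexads already fixed. So `|G| = 77 · 16 · 15 · 3 · 2⁴ = 887040`.
-/

namespace BelyiM22

/-! ### Polynomials given by coefficient lists -/

section Horner

variable {R S : Type*} [CommRing R] [CommRing S]

/-- The value at `x` of the polynomial with coefficient list `l`, constant term first. -/
def horner (l : List R) (x : R) : R := l.foldr (fun a v => a + x * v) 0

/-- The value at `x` of an integer polynomial, given by its coefficient list. -/
def intHorner (l : List ℤ) (x : R) : R := horner (l.map (↑)) x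

/-- The value at `(x, y)` of `∑ⱼ Lⱼ(x) yʲ`, where `Lⱼ` is the `j`-th row of `L`. -/
def intHorner₂ (L : List (List ℤ)) (x y : R) : R := horner (L.map (intHorner · x)) y

@[simp]
theorem horner_nil (x : R) : horner [] x = 0 := rfl

@[simp]
theorem horner_cons (a : R) (l : List R) (x : R) : horner (a :: l) x = a + x * horner l x := rfl

theorem map_horner (φ : R →+* S) (l : List R) (x : R) :
    φ (horner l x) = horner (l.map φ) (φ x) := by
  induction l with
  | nil => simp
  | cons a l ih => simp [ih]

theorem map_intHorner (φ : R →+* S) (l : List ℤ) (x : R) :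
    φ (intHorner l x) = intHorner l (φ x) := by
  simp [intHorner, map_horner, Function.comp_def]

theorem map_intHorner₂ (φ : R →+* S) (L : List (List ℤ)) (x y : R) :
    φ (intHorner₂ L x y) = intHorner₂ L (φ x) (φ y) := by
  simp [intHorner₂, map_horner, Function.comp_def, map_intHorner]

end Horner

/-! ### The `ℓ¹` seminorm on polynomials and Kronecker substitution -/

section Kronecker

variable {R : Type*} [CommRing R]

/-- The sum of the seminorms of the coefficients of a polynomial, as an additive seminorm. -/
def l1AddGroupSeminorm (ν : RingSeminorm R) : AddGroupSeminorm R[X] where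
  toFun f := f.sum fun _ a => ν a
  map_zero' := sum_zero_index _
  add_le' f g := by
    have extend (h : R[X]) (hh : h.support ⊆ f.support ∪ g.support) :
        h.sum (fun _ a => ν a) = ∑ i ∈ f.support ∪ g.support, ν (h.coeff i) :=
      sum_eq_of_subset _ (fun _ => map_zero ν) hh
    rw [extend _ support_add, extend f Finset.subset_union_left,
      extend g Finset.subset_union_right, ← Finset.sum_add_distrib]
    exact Finset.sum_le_sum fun i _ => by simpa using map_add_le_add ν _ _
  neg' f := by simp [sum_def]

theorem l1AddGroupSeminorm_monomial (ν : RingSeminorm R) (n : ℕ) (a : R) :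
    l1AddGroupSeminorm ν (monomial n a) = ν a :=
  sum_monomial_index a _ (map_zero ν)

/-- The `ℓ¹` seminorm of a polynomial with respect to a seminorm on its coefficients. -/
def l1Seminorm (ν : RingSeminorm R) : RingSeminorm R[X] where
  toAddGroupSeminorm := l1AddGroupSeminorm ν
  mul_le' f g := by
    change l1AddGroupSeminorm ν (f * g) ≤ f.sum (fun _ a => ν a) * g.sum (fun _ a => ν a)
    rw [mul_eq_sum_sum, sum_def, Finset.sum_mul]
    refine (Finset.le_sum_of_subadditive _ (map_zero _).le (map_add_le_add _) _ _).trans ?_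
    refine Finset.sum_le_sum fun i _ => ?_
    rw [sum_def, sum_def, Finset.mul_sum]
    refine (Finset.le_sum_of_subadditive _ (map_zero _).le (map_add_le_add _) _ _).trans ?_
    refine Finset.sum_le_sum fun j _ => ?_
    rw [l1AddGroupSeminorm_monomial]
    exact map_mul_le_mul ν _ _

variable (ν : RingSeminorm R)

theorem seminorm_coeff_le_l1Seminorm (f : R[X]) (i : ℕ) : ν (f.coeff i) ≤ l1Seminorm ν f := by
  by_cases hi : i ∈ f.support
  · exact Finset.single_le_sum (f := fun i => ν (f.coeff i)) (fun _ _ => apply_nonneg ν _) hi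
  · rw [notMem_support_iff.mp hi, map_zero]
    exact apply_nonneg _ f

theorem l1Seminorm_C (a : R) : l1Seminorm ν (C a) = ν a :=
  l1AddGroupSeminorm_monomial ν 0 a

theorem l1Seminorm_X : l1Seminorm ν X = ν 1 :=
  l1AddGroupSeminorm_monomial ν 1 1

variable {ν} in
theorem l1Seminorm_one_le (hν : ν 1 ≤ 1) : l1Seminorm ν 1 ≤ 1 := by
  rwa [← C_1, l1Seminorm_C]

theorem seminorm_intCast_le (hν : ν 1 ≤ 1) (n : ℤ) : ν n ≤ |(n : ℝ)| := by
  have natCast_le (m : ℕ) : ν m ≤ m := by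
    induction m with
    | zero => simp
    | succ m ih => push_cast; exact (map_add_le_add ν _ _).trans (add_le_add ih hν)
  obtain ⟨m, rfl | rfl⟩ := n.eq_nat_or_neg <;> simpa using natCast_le m

theorem seminorm_horner_le {x : R} (hx : ν x ≤ 1) (l : List R) :
    ν (horner l x) ≤ (l.map ν).sum := by
  induction l with
  | nil => simp
  | cons a l ih =>
    have hmul : ν (x * horner l x) ≤ ν (horner l x) :=
      (map_mul_le_mul ν _ _).trans (mul_le_of_le_one_left (apply_nonneg ν _) hx)
    simpa using (map_add_le_add ν _ _).trans (by gcongr; exact hmul.trans ih)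

theorem seminorm_intHorner_le (hν : ν 1 ≤ 1) {x : R} (hx : ν x ≤ 1) (l : List ℤ) :
    ν (intHorner l x) ≤ ((l.map Int.natAbs).sum : ℕ) := by
  refine (seminorm_horner_le ν hx _).trans ?_
  rw [List.map_map, Nat.cast_list_sum, List.map_map]
  refine List.sum_le_sum fun n _ => ?_
  simpa using seminorm_intCast_le ν hν n

theorem seminorm_intHorner₂_le (hν : ν 1 ≤ 1) {x y : R} (hx : ν x ≤ 1) (hy : ν y ≤ 1)
    (L : List (List ℤ)) :
    ν (intHorner₂ L x y) ≤ ((L.map fun l => (l.map Int.natAbs).sum).sum : ℕ) := by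
  refine (seminorm_horner_le ν hy _).trans ?_
  rw [List.map_map, Nat.cast_list_sum, List.map_map]
  exact List.sum_le_sum fun l _ => seminorm_intHorner_le ν hν hx l

theorem eq_zero_of_eval_eq_zero_of_abs_coeff_lt {f : ℤ[X]} {N : ℤ} (hN : 0 < N)
    (hcoeff : ∀ i, |f.coeff i| < N) (heval : f.eval N = 0) : f = 0 := by
  induction hn : f.natDegree using Nat.strong_induction_on generalizing f with
  | _ n ih =>
    have hsplit : f.divX.eval N * N + f.coeff 0 = 0 := by
      rw [← heval]; conv_rhs => rw [← divX_mul_X_add f]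
      simp
    have hcoeff_zero : f.coeff 0 = 0 :=
      Int.eq_zero_of_abs_lt_dvd (Dvd.intro_left (-f.divX.eval N) (by linarith)) (hcoeff 0)
    have hdivX : f.divX.eval N = 0 := by
      simpa [hcoeff_zero, hN.ne'] using hsplit
    by_cases hf : f.natDegree = 0
    · rw [eq_C_of_natDegree_eq_zero hf, hcoeff_zero, C_0]
    · have := ih f.divX.natDegree (by rw [natDegree_divX_eq_natDegree_tsub_one]; omega)
        (fun i => by simpa [coeff_divX] using hcoeff (i + 1)) hdivX rfl
      rw [← divX_mul_X_add f, this, hcoeff_zero]; simp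

end Kronecker

/-! ### The fibres of the Belyi map and the graph on each of them -/

section Fibre

variable {R S : Type*} [CommRing R] [CommRing S]

/-- The radical of `p`: the Belyi map `p / q` vanishes at its roots, with multiplicity `11`. -/
def septic (x : R) : R := intHorner [3, 1, 1] x * intHorner [-1, 1, 15, -14, -3, 1] x

/-- The part of `r` at whose roots the Belyi map takes the value `1` with multiplicity `4`. -/
def quadruplePart (x : R) : R :=
  intHorner [-2, -16, 7, 2, 1] x * intHorner [16, 60, -30, 8, 34, 14, 1] x *
    intHorner [-2, -2, -10, 10, 15, 1, 4] x

/-- The part of `r` at whose roots the Belyi map takes the value `1` with multiplicity `2`. -/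
def doublePart (x : R) : R := intHorner [-8, -8, 92, -136, 71, -29, 16] x

/-- A square root of `-r`. -/
def sqrtNegR (x : R) : R := 121 * quadruplePart x ^ 2 * doublePart x

/-- The equation `p / 2²² + s r = 0` of the fibre over `s`; the roots of `F` satisfy it for
`s = t / (2²² (1 - t))`. -/
def fibre (s x : R) : R := septic x ^ 11 - s * sqrtNegR x ^ 2

/-- The coefficients of `graphPoly`; the entry `i` of row `j` is the coefficient of `xⁱ yʲ`. -/
def graphCoeffs : List (List ℤ) := [[256, 448, -1112, 20040, -3500, -108276, 455796, -622732,
  377432, -483296, 113322, 171518, 120345, 72719, 16925, -477, 16], [448, -16640, -49136, 212456,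
  -423696, -1516248, 7004096, -5020224, -236588, -2986016, 1129348, 1008914, 544110, 247502,
  -41862, -21072, 512], [-1112, -49136, 161132, 1254932, -4159312, -8016964, 25088184,
  -8304208, -5498372, 1078440, -467203, -1226271, -1338489, -1099057, -629668, -51376, 5920],
  [20040, 212456, 1254932, 846840, -6527824, 6212164, -14475626, -10320772, 30801980, 11500500,
  -4788982, -3129416, -2611880, -1967246, 195568, 249842, 27328], [-3500, -423696, -4159312,
  -6527824, 38939180, 56462562, -154126566, 29046336, 39917273, -51879905, 33238898, 17473243,
  9274929, 5571098, 3064324, 356652, 22136], [-108276, -1516248, -8016964, 6212164, 56462562,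
  -155777872, 25864608, 334846754, -259433592, 19646792, -12168794, -47300952, -19468432,
  -3592994, -2456208, -903316, -108256], [455796, 7004096, 25088184, -14475626, -154126566,
  25864608, 462444455, -522615577, 3728010, 218299609, -31240143, 21042846, 26633090, 6594830,
  -298210, 9614, 44792], [-622732, -5020224, -8304208, -10320772, 29046336, 334846754,
  -522615577, -100891010, 471165288, -146156626, -83403243, 25860956, -7062154, -8611405,
  -2003914, 22715, 9328], [377432, -236588, -5498372, 30801980, 39917273, -259433592, 3728010,
  471165288, -149572093, -218205713, 91785155, 22290807, -9706081, 739167, 1566059, 349767,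
  10945], [-483296, -2986016, 1078440, 11500500, -51879905, 19646792, 218299609, -146156626,
  -218205713, 118040340, 67839255, -31669011, -4352810, 2576266, 542916, -6061, -6248],
  [113322, 1129348, -467203, -4788982, 33238898, -12168794, -31240143, -83403243, 91785155,
  67839255, -50466075, -18911079, 6676769, 1234761, -7711, -19206, -2068], [171518, 1008914,
  -1226271, -3129416, 17473243, -47300952, 21042846, 25860956, 22290807, -31669011, -18911079,
  11824550, 4301384, -587844, -71222, -11283, -760], [120345, 544110, -1338489, -2611880,
  9274929, -19468432, 26633090, -7062154, -9706081, -4352810, 6676769, 4301384, -1468554,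
  -615952, 17322, -3050, 254], [72719, 247502, -1099057, -1967246, 5571098, -3592994, 6594830,
  -8611405, 739167, 2576266, 1234761, -587844, -615952, 56732, 40710, -727, 136], [16925,
  -41862, -629668, 195568, 3064324, -2456208, -298210, -2003914, 1566059, 542916, -7711,
  -71222, 17322, 40710, 2099, -1036, 52], [-477, -21072, -51376, 249842, 356652, -903316, 9614,
  22715, 349767, -6061, -19206, -11283, -3050, -727, -1036, -178, 8], [16, 512, 5920, 27328,
  22136, -108256, 44792, 9328, 10945, -6248, -2068, -760, 254, 136, 52, 8, 1]]

/-- A symmetric correspondence of bidegree `(16, 16)`: on each fibre it cuts out the edges of the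
graph of the `77` hexads of the Steiner system `S(3, 6, 22)`, two being adjacent when disjoint. -/
def graphPoly (x y : R) : R := intHorner₂ graphCoeffs x y

/-- The first `k` digits of `n` in base `b`, least significant first. -/
def firstDigits (b : ℕ) : ℕ → ℕ → List ℕ
  | 0, _ => []
  | k + 1, n => n % b :: firstDigits b k (n / b)

/-- The value substituted for `x` in the Kronecker substitution below. -/
def kroneckerX : ℤ := (2 ^ 200 : ℕ)

/-- The value substituted for `y` in the Kronecker substitution below. -/
def kroneckerY : ℤ := (2 ^ 16000 : ℕ)

/-- The coefficients of `(P(y) Q(x) - P(x) Q(y)) / ((x - y) A(x, y))` for `P = septic ^ 11`,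
`Q = sqrtNegR ^ 2` and `A = graphPoly`, read off as digits of its value at
`(kroneckerX, kroneckerY)`, after adding `2¹⁹⁹` to each of the `61 × 61` coefficients to make them
positive. -/
def cofactorCoeffs : List (List ℤ) :=
  let x := kroneckerX
  let y := kroneckerY
  let quotient := (septic y ^ 11 * sqrtNegR x ^ 2 - septic x ^ 11 * sqrtNegR y ^ 2) /
    ((x - y) * graphPoly x y)
  let shift := 2 ^ 199 * (intHorner (.replicate 61 1) x * intHorner (.replicate 61 1) y)
  (firstDigits (2 ^ 16000) 61 (quotient + shift).toNat).map fun row =>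
    (firstDigits (2 ^ 200) 61 row).map fun digit => (digit : ℤ) - 2 ^ 199

/-- The correspondence complementary to the diagonal and `graphPoly` in the fibre product. -/
def cofactor (x y : R) : R := intHorner₂ cofactorCoeffs x y

/-- The difference of the two sides of the factorization of the fibre product. -/
def factorizationDefect (x y : R) : R :=
  (x - y) * graphPoly x y * cofactor x y -
    (septic y ^ 11 * sqrtNegR x ^ 2 - septic x ^ 11 * sqrtNegR y ^ 2)

theorem map_septic (φ : R →+* S) (x : R) : φ (septic x) = septic (φ x) := by
  simp [septic, map_intHorner]

theorem map_sqrtNegR (φ : R →+* S) (x : R) : φ (sqrtNegR x) = sqrtNegR (φ x) := by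
  simp [sqrtNegR, quadruplePart, doublePart, map_intHorner, map_ofNat]

theorem map_fibre (φ : R →+* S) (s x : R) : φ (fibre s x) = fibre (φ s) (φ x) := by
  simp [fibre, map_septic, map_sqrtNegR]

theorem map_graphPoly (φ : R →+* S) (x y : R) : φ (graphPoly x y) = graphPoly (φ x) (φ y) :=
  map_intHorner₂ φ _ x y

theorem map_cofactor (φ : R →+* S) (x y : R) : φ (cofactor x y) = cofactor (φ x) (φ y) :=
  map_intHorner₂ φ _ x y

theorem map_factorizationDefect (φ : R →+* S) (x y : R) :
    φ (factorizationDefect x y) = factorizationDefect (φ x) (φ y) := by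
  simp [factorizationDefect, map_graphPoly, map_cofactor, map_septic, map_sqrtNegR]

section Bounds

variable (ν : RingSeminorm R)

theorem seminorm_factorizationDefect_le (x y : R) :
    ν (factorizationDefect x y) ≤ (ν x + ν y) * ν (graphPoly x y) * ν (cofactor x y) +
      (ν (septic y ^ 11) * ν (sqrtNegR x ^ 2) + ν (septic x ^ 11) * ν (sqrtNegR y ^ 2)) := by
  refine (map_sub_le_add ν _ _).trans (add_le_add ?_ ?_)
  · refine (map_mul_le_mul ν _ _).trans ?_
    gcongr
    refine (map_mul_le_mul ν _ _).trans ?_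
    gcongr
    exact map_sub_le_add ν x y
  · exact (map_sub_le_add ν _ _).trans (add_le_add (map_mul_le_mul ν _ _) (map_mul_le_mul ν _ _))

theorem seminorm_septic_pow_le (hν : ν 1 ≤ 1) {x : R} (hx : ν x ≤ 1) :
    ν (septic x ^ 11) ≤ 2 ^ 82 := by
  have hseptic : ν (septic x) ≤ 5 * 35 := by
    refine (map_mul_le_mul ν _ _).trans ?_
    gcongr
    · simpa using seminorm_intHorner_le ν hν hx [3, 1, 1]
    · simpa using seminorm_intHorner_le ν hν hx [-1, 1, 15, -14, -3, 1]
  calc ν (septic x ^ 11) ≤ ν (septic x) ^ 11 := map_pow_le_pow _ _ (by norm_num)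
    _ ≤ (5 * 35) ^ 11 := by gcongr
    _ ≤ 2 ^ 82 := by norm_num

theorem seminorm_sqrtNegR_sq_le (hν : ν 1 ≤ 1) {x : R} (hx : ν x ≤ 1) :
    ν (sqrtNegR x ^ 2) ≤ 2 ^ 102 := by
  have hquadruple : ν (quadruplePart x) ≤ 28 * 163 * 44 := by
    refine (map_mul_le_mul ν _ _).trans ?_
    gcongr
    · refine (map_mul_le_mul ν _ _).trans ?_
      gcongr
      · simpa using seminorm_intHorner_le ν hν hx [-2, -16, 7, 2, 1]
      · simpa using seminorm_intHorner_le ν hν hx [16, 60, -30, 8, 34, 14, 1]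
    · simpa using seminorm_intHorner_le ν hν hx [-2, -2, -10, 10, 15, 1, 4]
  have hdouble : ν (doublePart x) ≤ 360 := by
    simpa [doublePart] using seminorm_intHorner_le ν hν hx [-8, -8, 92, -136, 71, -29, 16]
  have hsqrtNegR : ν (sqrtNegR x) ≤ 121 * (28 * 163 * 44) ^ 2 * 360 := by
    refine (map_mul_le_mul ν _ _).trans ?_
    gcongr
    refine (map_mul_le_mul ν _ _).trans ?_
    gcongr
    · simpa using seminorm_intCast_le ν hν 121
    · exact (map_pow_le_pow _ _ two_ne_zero).trans (by gcongr)
  calc ν (sqrtNegR x ^ 2) ≤ ν (sqrtNegR x) ^ 2 := map_pow_le_pow _ _ two_ne_zero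
    _ ≤ (121 * (28 * 163 * 44) ^ 2 * 360) ^ 2 := by gcongr
    _ ≤ 2 ^ 102 := by norm_num

end Bounds

theorem intHorner₂_intCast_left (L : List (List ℤ)) (n : ℤ) (y : R) :
    intHorner₂ L (n : R) y = intHorner (L.map (intHorner · n)) y := by
  rw [intHorner₂, intHorner, List.map_map]
  congr! 3
  exact (map_intHorner (Int.castRingHom R) _ n).symm

theorem factorizationDefect_kronecker_eq_zero :
    factorizationDefect kroneckerX kroneckerY = 0 := by
  decide +kernel

theorem l1_graphCoeffs_le : (graphCoeffs.map fun l => (l.map Int.natAbs).sum).sum ≤ 2 ^ 34 := by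
  decide +kernel

theorem l1_cofactorCoeffs_le :
    (cofactorCoeffs.map fun l => (l.map Int.natAbs).sum).sum ≤ 2 ^ 150 := by
  decide +kernel

theorem l1_graphCoeffs_kroneckerX_le :
    ((graphCoeffs.map (intHorner · kroneckerX)).map Int.natAbs).sum ≤ 2 ^ 3300 := by
  decide +kernel

theorem l1_cofactorCoeffs_kroneckerX_le :
    ((cofactorCoeffs.map (intHorner · kroneckerX)).map Int.natAbs).sum ≤ 2 ^ 12300 := by
  decide +kernel

theorem natAbs_septic_kroneckerX_le :
    (septic kroneckerX ^ 11).natAbs ≤ 2 ^ 15500 := by decide +kernel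

theorem natAbs_sqrtNegR_kroneckerX_le :
    (sqrtNegR kroneckerX ^ 2).natAbs ≤ 2 ^ 15500 := by decide +kernel

section Identity

variable {ν : RingSeminorm R}

theorem seminorm_factorizationDefect_lt (hν : ν 1 ≤ 1) {x y : R} (hx : ν x ≤ 1) (hy : ν y ≤ 1) :
    ν (factorizationDefect x y) < 2 ^ 200 := by
  have hgraph : ν (graphPoly x y) ≤ 2 ^ 34 :=
    (seminorm_intHorner₂_le ν hν hx hy _).trans (mod_cast l1_graphCoeffs_le)
  have hcofactor : ν (cofactor x y) ≤ 2 ^ 150 :=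
    (seminorm_intHorner₂_le ν hν hx hy _).trans (mod_cast l1_cofactorCoeffs_le)
  calc ν (factorizationDefect x y)
    _ ≤ (1 + 1) * 2 ^ 34 * 2 ^ 150 + (2 ^ 82 * 2 ^ 102 + 2 ^ 82 * 2 ^ 102) := by
      refine (seminorm_factorizationDefect_le ν _ _).trans ?_
      gcongr
      · exact seminorm_septic_pow_le ν hν hy
      · exact seminorm_sqrtNegR_sq_le ν hν hx
      · exact seminorm_septic_pow_le ν hν hx
      · exact seminorm_sqrtNegR_sq_le ν hν hy
    _ < 2 ^ 200 := by norm_num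

theorem seminorm_intCast_le_of_natAbs_le (hν : ν 1 ≤ 1) {a : ℤ} {b : ℕ} (hab : a.natAbs ≤ b) :
    ν a ≤ b :=
  (seminorm_intCast_le ν hν a).trans (by simpa using (Nat.cast_le (α := ℝ)).mpr hab)

set_option exponentiation.threshold 16000 in
theorem seminorm_factorizationDefect_kroneckerX_lt (hν : ν 1 ≤ 1) {y : R} (hy : ν y ≤ 1) :
    ν (factorizationDefect (kroneckerX : R) y) < 2 ^ 16000 := by
  have hx : ν (kroneckerX : R) ≤ 2 ^ 200 :=
    mod_cast seminorm_intCast_le_of_natAbs_le hν (b := 2 ^ 200) le_rfl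
  have hgraph : ν (graphPoly (kroneckerX : R) y) ≤ 2 ^ 3300 := by
    rw [graphPoly, intHorner₂_intCast_left]
    exact (seminorm_intHorner_le ν hν hy _).trans (mod_cast l1_graphCoeffs_kroneckerX_le)
  have hcofactor : ν (cofactor (kroneckerX : R) y) ≤ 2 ^ 12300 := by
    rw [cofactor, intHorner₂_intCast_left]
    exact (seminorm_intHorner_le ν hν hy _).trans (mod_cast l1_cofactorCoeffs_kroneckerX_le)
  have hseptic : ν (septic (kroneckerX : R) ^ 11) ≤ 2 ^ 15500 := by
    rw [← eq_intCast (Int.castRingHom R), ← map_septic, ← map_pow]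
    exact (seminorm_intCast_le_of_natAbs_le hν natAbs_septic_kroneckerX_le).trans (mod_cast le_rfl)
  have hsqrtNegR : ν (sqrtNegR (kroneckerX : R) ^ 2) ≤ 2 ^ 15500 := by
    rw [← eq_intCast (Int.castRingHom R), ← map_sqrtNegR, ← map_pow]
    exact (seminorm_intCast_le_of_natAbs_le hν natAbs_sqrtNegR_kroneckerX_le).trans
      (mod_cast le_rfl)
  calc ν (factorizationDefect (kroneckerX : R) y)
    _ ≤ (2 ^ 200 + 1) * 2 ^ 3300 * 2 ^ 12300 + (2 ^ 82 * 2 ^ 15500 + 2 ^ 15500 * 2 ^ 102) := by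
      refine (seminorm_factorizationDefect_le ν _ _).trans ?_
      gcongr
      · exact seminorm_septic_pow_le ν hν hy
      · exact seminorm_sqrtNegR_sq_le ν hν hy
    _ < 2 ^ 16000 := by norm_num

end Identity

set_option exponentiation.threshold 16000 in
theorem factorizationDefect_kroneckerX_X : factorizationDefect (kroneckerX : ℤ[X]) X = 0 := by
  let ν := l1Seminorm (normRingSeminorm ℤ)
  have hν : ν 1 ≤ 1 := l1Seminorm_one_le (norm_one (α := ℤ)).le
  have hX : ν X ≤ 1 := (l1Seminorm_X _).trans_le (norm_one (α := ℤ)).le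
  have hnorm := seminorm_factorizationDefect_kroneckerX_lt hν hX
  refine eq_zero_of_eval_eq_zero_of_abs_coeff_lt (N := kroneckerY) (by decide +kernel) ?_ ?_
  · intro i
    have : |((factorizationDefect (kroneckerX : ℤ[X]) X).coeff i : ℝ)| < 2 ^ 16000 :=
      (seminorm_coeff_le_l1Seminorm _ _ i).trans_lt hnorm
    exact_mod_cast this
  · have := map_factorizationDefect (evalRingHom kroneckerY) (kroneckerX : ℤ[X]) X
    simpa [factorizationDefect_kronecker_eq_zero] using this

theorem factorizationDefect_C_X : factorizationDefect (C X : ℤ[X][X]) X = 0 := by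
  let ν := l1Seminorm (normRingSeminorm ℤ)
  have hν : ν 1 ≤ 1 := l1Seminorm_one_le (norm_one (α := ℤ)).le
  have hX : ν X ≤ 1 := (l1Seminorm_X _).trans_le (norm_one (α := ℤ)).le
  have hnorm := seminorm_factorizationDefect_lt (ν := l1Seminorm ν) (x := C X) (y := X)
    (l1Seminorm_one_le hν) ((l1Seminorm_C ν X).trans_le hX) ((l1Seminorm_X ν).trans_le hν)
  have heval := map_factorizationDefect (mapRingHom (evalRingHom kroneckerX)) (C X : ℤ[X][X]) X
  ext1 j
  refine eq_zero_of_eval_eq_zero_of_abs_coeff_lt (N := kroneckerX) (by decide +kernel) ?_ ?_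
  · intro i
    have : |(((factorizationDefect (C X : ℤ[X][X]) X).coeff j).coeff i : ℝ)| < 2 ^ 200 :=
      ((seminorm_coeff_le_l1Seminorm _ _ i).trans
        (seminorm_coeff_le_l1Seminorm ν _ j)).trans_lt hnorm
    exact_mod_cast this
  · simpa [factorizationDefect_kroneckerX_X] using congrArg (coeff · j) heval

theorem sub_mul_graphPoly_mul_cofactor (x y : R) :
    (x - y) * graphPoly x y * cofactor x y =
      septic y ^ 11 * sqrtNegR x ^ 2 - septic x ^ 11 * sqrtNegR y ^ 2 := by
  have := map_factorizationDefect (eval₂RingHom (eval₂RingHom (Int.castRingHom R) x) y) (C X) X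
  rw [factorizationDefect_C_X, map_zero] at this
  simpa [factorizationDefect, sub_eq_zero] using this.symm

end Fibre

/-! ### Simplicity of the roots of the fibres -/

section Separable

variable {R S : Type*} [CommRing R] [CommRing S]

/-- The double poles of the Belyi map, which are also its critical points other than the points
over `0` and over `1`. -/
def doublePoles (x : R) : R :=
  intHorner [92672, 1162752, 5326592, 3811328, -44451456, -38328448, 217732928, -211525248,
    -20282064, 365691920, 159464888, -1951432000, 2241301952, -403470600, -388885580, 156269808,
    -69210476, -57968788, 59821058, -10759408, 14730848, 211662, -1747835, -2683396, -934510,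
    -378626, -61873, -6132, -64] x

/-- The simple poles of the Belyi map other than `∞`. -/
def simplePoles (x : R) : R :=
  intHorner [1744, 53888, 419696, 1303408, 2924468, 6577720, -10195692, -51302832, 22097192,
    34917264, 20365692, 1888844, -11325503, -10908278, -4885097, -704512, 801395, 734138, 332281,
    93800, 15504, 1024] x

theorem map_quadruplePart (φ : R →+* S) (x : R) : φ (quadruplePart x) = quadruplePart (φ x) := by
  simp [quadruplePart, map_intHorner]

theorem map_doublePoles (φ : R →+* S) (x : R) : φ (doublePoles x) = doublePoles (φ x) :=
  map_intHorner φ _ x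

theorem eval_fibre_C_X (s x : R) : (fibre (C s) X).eval x = fibre s x := by
  simpa using map_fibre (evalRingHom x) (C s) X

theorem two_pow_mul_septic_pow_add_sqrtNegR_sq (x : R) :
    2 ^ 22 * septic x ^ 11 + sqrtNegR x ^ 2 = doublePoles x ^ 2 * simplePoles x := by
  simp [septic, sqrtNegR, quadruplePart, doublePart, doublePoles, simplePoles, intHorner]
  ring

theorem doublePoles_X_eq :
    doublePoles X = 2 * septic X *
        (2 * derivative (quadruplePart X) * doublePart X +
          quadruplePart X * derivative (doublePart X)) -
      11 * derivative (septic X) * quadruplePart X * doublePart (X : R[X]) := by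
  simp [septic, quadruplePart, doublePart, doublePoles, intHorner]
  ring

theorem septic_mul_derivative_fibre (s : R) :
    septic X * derivative (fibre (C s) X) = 11 * derivative (septic X) * fibre (C s) X -
      121 * C s * sqrtNegR X * quadruplePart X * doublePoles X := by
  rw [doublePoles_X_eq]
  simp only [fibre, sqrtNegR, derivative_sub, derivative_mul, derivative_pow, derivative_C,
    derivative_ofNat, Nat.cast_ofNat, map_ofNat]
  ring

theorem sqrtNegR_ne_zero_of_septic_eq_zero {k : Type*} [Field k] (h11 : (11 : k) ≠ 0) {x : k}
    (hseptic : septic x = 0) : sqrtNegR x ≠ 0 := by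
  have factor_ne_zero {u v w : k} {n : ℕ} (h : u * septic x + v * w = 11 ^ n) : w ≠ 0 := by
    rintro rfl
    exact pow_ne_zero n h11 (by simpa [hseptic] using h.symm)
  have quartic_ne_zero : intHorner [-2, -16, 7, 2, 1] x ≠ 0 := by
    refine factor_ne_zero (n := 4) (u := intHorner [-5475, 2152, 597, 321] x)
      (v := intHorner [892, -15839, 7903, 1942, 4409, 687, -321] x) ?_
    simp [septic, intHorner]
    ring
  have sextic_ne_zero : intHorner [16, 60, -30, 8, 34, 14, 1] x ≠ 0 := by
    refine factor_ne_zero (n := 5)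
      (u := intHorner [-248345, 111758, -3649, -114680, -51221, -3720] x)
      (v := intHorner [-36499, 188869, -92878, -18255, -50136, -8299, 3720] x) ?_
    simp [septic, intHorner]
    ring
  have sextic'_ne_zero : intHorner [-2, -2, -10, 10, 15, 1, 4] x ≠ 0 := by
    refine factor_ne_zero (n := 4) (u := intHorner [-959, 1498, 2769, 808, 643, 156] x)
      (v := intHorner [-5882, 2676, 2501, 2438, 830, -73, -39] x) ?_
    simp [septic, intHorner]
    ring
  have doublePart_ne_zero : doublePart x ≠ 0 := by
    refine factor_ne_zero (n := 5)
      (u := intHorner [-78409, 319386, -364899, 170970, -80633, 33232] x)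
      (v := intHorner [9272, -148644, 30905, -1898, 27370, 5429, -2077] x) ?_
    simp [septic, doublePart, intHorner]
    ring
  have h121 : (121 : k) ≠ 0 := by
    rw [show (121 : k) = 11 ^ 2 by norm_num]
    exact pow_ne_zero 2 h11
  simp [sqrtNegR, quadruplePart, h121, quartic_ne_zero, sextic_ne_zero, sextic'_ne_zero,
    doublePart_ne_zero]

theorem sub_mul_graphPoly_mul_cofactor_of_fibre_eq_zero {s x : R} (hx : fibre s x = 0) (y : R) :
    (x - y) * graphPoly x y * cofactor x y = sqrtNegR x ^ 2 * fibre s y := by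
  rw [sub_mul_graphPoly_mul_cofactor]
  unfold fibre at hx ⊢
  linear_combination -sqrtNegR y ^ 2 * hx

theorem graphPoly_eq_zero_or_cofactor_eq_zero [IsDomain R] {s x y : R} (hx : fibre s x = 0)
    (hy : fibre s y = 0) (hxy : x ≠ y) : graphPoly x y = 0 ∨ cofactor x y = 0 := by
  simpa [hy, sub_ne_zero.mpr hxy] using sub_mul_graphPoly_mul_cofactor_of_fibre_eq_zero hx y

variable {k : Type*} [Field k]

/-- The points `s` over which the fibre of the Belyi map is étale. -/
structure IsRegularValue (s : k) : Prop where
  eleven_ne_zero : (11 : k) ≠ 0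
  ne_zero : s ≠ 0
  one_add_ne_zero : 1 + 2 ^ 22 * s ≠ 0

variable {s x y : k}

theorem sqrtNegR_ne_zero_of_fibre_eq_zero (h11 : (11 : k) ≠ 0) (hx : fibre s x = 0) :
    sqrtNegR x ≠ 0 := fun hsqrt =>
  sqrtNegR_ne_zero_of_septic_eq_zero h11 (by simpa [fibre, hsqrt] using hx) hsqrt

theorem eval_derivative_fibre_ne_zero (hs : IsRegularValue s) (hx : fibre s x = 0) :
    (derivative (fibre (C s) X)).eval x ≠ 0 := by
  intro hderiv
  have hsqrt := sqrtNegR_ne_zero_of_fibre_eq_zero hs.eleven_ne_zero hx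
  have hquadruple : quadruplePart x ≠ 0 := by rintro h; simp [sqrtNegR, h] at hsqrt
  have h121 : (121 : k) ≠ 0 := by rintro h; simp [sqrtNegR, h] at hsqrt
  have hdouble : doublePoles x = 0 := by
    have heval := congrArg (eval x) (septic_mul_derivative_fibre s)
    simp only [eval_mul, eval_sub, hderiv, eval_fibre_C_X, hx, eval_C, eval_ofNat] at heval
    simp only [← coe_evalRingHom, map_sqrtNegR, map_quadruplePart, map_doublePoles] at heval
    simpa [hs.ne_zero, hsqrt, hquadruple, h121] using heval
  have : (1 + 2 ^ 22 * s) * sqrtNegR x ^ 2 = 0 := by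
    unfold fibre at hx
    linear_combination two_pow_mul_septic_pow_add_sqrtNegR_sq x - 2 ^ 22 * hx +
      doublePoles x * simplePoles x * hdouble
  simp [hs.one_add_ne_zero, hsqrt] at this

/-- A common zero off the diagonal would be a double root of the fibre. -/
theorem cofactor_ne_zero_of_graphPoly_eq_zero (hs : IsRegularValue s) (hx : fibre s x = 0)
    (hy : fibre s y = 0) (hxy : graphPoly x y = 0) : cofactor x y ≠ 0 := by
  intro hcofactor
  have hCx : fibre (C s) (C x) = 0 := by rw [← map_fibre, hx, C_0]
  have hgraph_eval : (graphPoly (C x) X).eval y = 0 := by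
    simpa [hxy] using map_graphPoly (evalRingHom y) (C x) X
  have hcofactor_eval : (cofactor (C x) X).eval y = 0 := by
    simpa [hcofactor] using map_cofactor (evalRingHom y) (C x) X
  have hderiv := congrArg (eval y ∘ derivative)
    (sub_mul_graphPoly_mul_cofactor_of_fibre_eq_zero hCx X)
  rw [← map_sqrtNegR, ← C_pow] at hderiv
  simp only [Function.comp_apply, derivative_mul, derivative_C, eval_add, eval_mul, hgraph_eval,
    hcofactor_eval, eval_C, mul_zero, zero_mul, add_zero, zero_add] at hderiv
  refine mul_ne_zero (pow_ne_zero 2 ?_) (eval_derivative_fibre_ne_zero hs hy) hderiv.symm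
  exact sqrtNegR_ne_zero_of_fibre_eq_zero hs.eleven_ne_zero hx

end Separable

/-! ### Orders of groups acting on graphs, via homogeneity of adjacency patterns -/

section Pattern

variable {α β : Type*}

/-- The points outside `xs` whose adjacency to the members of `xs` is described by `b`. -/
def extensions (adj : α → α → Prop) (xs : List α) (b : List Bool) : Set α :=
  {y | y ∉ xs ∧ List.Forall₂ (fun x c => adj x y ↔ c = true) xs b}

/-- The list `xs`, newest point first, is a chain in which each point extends the earlier ones
as prescribed by the corresponding member of `bs`. -/
def HasPattern (adj : α → α → Prop) : List (List Bool) → List α → Prop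
  | [], [] => True
  | b :: bs, x :: xs => x ∈ extensions adj xs b ∧ HasPattern adj bs xs
  | _, _ => False

theorem mem_extensions_map_iff {adj : α → α → Prop} {adj' : β → β → Prop} {f : α → β}
    (hf : f.Injective) (hadj : ∀ ⦃x y⦄, x ≠ y → (adj' (f x) (f y) ↔ adj x y)) {xs : List α}
    {b : List Bool} {y : α} :
    f y ∈ extensions adj' (xs.map f) b ↔ y ∈ extensions adj xs b := by
  simp only [extensions, Set.mem_ofPred_eq, List.mem_map_of_injective hf, List.forall₂_map_left_iff]
  refine and_congr_right fun hy => ?_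
  induction xs generalizing b with
  | nil => simp
  | cons x xs ih =>
    simp only [List.mem_cons, not_or] at hy
    cases b <;> simp [ih hy.2, hadj (Ne.symm hy.1)]

theorem hasPattern_map_iff {adj : α → α → Prop} {adj' : β → β → Prop} {f : α → β}
    (hf : f.Injective) (hadj : ∀ ⦃x y⦄, x ≠ y → (adj' (f x) (f y) ↔ adj x y))
    {bs : List (List Bool)} {xs : List α} :
    HasPattern adj' bs (xs.map f) ↔ HasPattern adj bs xs := by
  induction bs generalizing xs with
  | nil => cases xs <;> simp [HasPattern]
  | cons b bs ih => cases xs <;> simp [HasPattern, ih, mem_extensions_map_iff hf hadj]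

end Pattern

section Homogeneous

open MulAction

variable {G Ω : Type*} [Group G] [MulAction G Ω] {adj : Ω → Ω → Prop} {bs : List (List Bool)}
  {b : List Bool} {xs ys : List Ω} {y : Ω}

variable (G) in
/-- The pointwise stabilizer of the members of a list. -/
abbrev fixer (xs : List Ω) : Subgroup G := fixingSubgroup G {x | x ∈ xs}

/-- The group action preserves the relation `adj`. -/
def PreservesAdj (G : Type*) [Group G] [MulAction G Ω] (adj : Ω → Ω → Prop) : Prop :=
  ∀ (g : G) (x y : Ω), adj (g • x) (g • y) ↔ adj x y

variable (G) in
/-- Any two chains with the patterns `bs` are conjugate. -/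
def IsHomogeneous (adj : Ω → Ω → Prop) (bs : List (List Bool)) : Prop :=
  ∀ xs ys, HasPattern adj bs xs → HasPattern adj bs ys → ∃ g : G, xs.map (g • ·) = ys

theorem mem_fixer {g : G} : g ∈ fixer G xs ↔ ∀ x ∈ xs, g • x = x :=
  mem_fixingSubgroup_iff G

theorem PreservesAdj.smul_mem_extensions_iff (hadj : PreservesAdj G adj) (g : G) :
    g • y ∈ extensions adj (xs.map (g • ·)) b ↔ y ∈ extensions adj xs b :=
  mem_extensions_map_iff (f := (g • ·)) (MulAction.injective g) fun _ _ _ => hadj g _ _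

theorem map_smul_eq_self_iff {g : G} : xs.map (g • ·) = xs ↔ g ∈ fixer G xs := by
  rw [mem_fixer]
  induction xs <;> simp_all

theorem PreservesAdj.smul_mem_extensions (hadj : PreservesAdj G adj) {g : G} (hg : g ∈ fixer G xs)
    (hy : y ∈ extensions adj xs b) : g • y ∈ extensions adj xs b := by
  simpa [map_smul_eq_self_iff.mpr hg] using (hadj.smul_mem_extensions_iff g).mpr hy

theorem IsHomogeneous.cons (hadj : PreservesAdj G adj) (hbs : IsHomogeneous G adj bs)
    (hxs : HasPattern adj bs xs)
    (htrans : ∀ y ∈ extensions adj xs b, extensions adj xs b ⊆ orbit (fixer G xs) y) :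
    IsHomogeneous G adj (b :: bs) := by
  have move : ∀ zs, HasPattern adj (b :: bs) zs →
      ∃ g : G, ∃ z ∈ extensions adj xs b, zs.map (g • ·) = z :: xs := by
    rintro (_ | ⟨z, zs⟩) hzs
    · exact hzs.elim
    · obtain ⟨g, rfl⟩ := hbs zs xs hzs.2 hxs
      exact ⟨g, g • z, (hadj.smul_mem_extensions_iff g).mpr hzs.1, rfl⟩
  intro ys zs hys hzs
  obtain ⟨g, y, hy, hgy⟩ := move ys hys
  obtain ⟨h, z, hz, hhz⟩ := move zs hzs
  obtain ⟨k, rfl⟩ := htrans y hy hz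
  refine ⟨h⁻¹ * k * g, ?_⟩
  have hzs_eq : zs = (k • y :: xs).map (h⁻¹ • ·) := by simp [← hhz, Function.comp_def]
  have hkxs : xs.map ((k : G) • ·) = xs := map_smul_eq_self_iff.mpr k.2
  calc ys.map ((h⁻¹ * k * g) • ·) = ((ys.map (g • ·)).map ((k : G) • ·)).map (h⁻¹ • ·) := by
        simp [mul_smul]
    _ = zs := by rw [hgy, List.map_cons, hkxs, hzs_eq]; rfl

theorem IsHomogeneous.extensions_subset_orbit (hbs : IsHomogeneous G adj (b :: bs))
    (hxs : HasPattern adj bs xs) (hy : y ∈ extensions adj xs b) :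
    extensions adj xs b ⊆ orbit (fixer G xs) y := by
  intro z hz
  obtain ⟨g, hg⟩ := hbs (y :: xs) (z :: xs) ⟨hy, hxs⟩ ⟨hz, hxs⟩
  obtain ⟨hgy, hgxs⟩ := List.cons_eq_cons.mp hg
  exact ⟨⟨g, map_smul_eq_self_iff.mp hgxs⟩, hgy⟩

theorem PreservesAdj.orbit_fixer_subset_extensions (hadj : PreservesAdj G adj)
    (hy : y ∈ extensions adj xs b) : orbit (fixer G xs) y ⊆ extensions adj xs b := by
  rintro _ ⟨g, rfl⟩
  exact hadj.smul_mem_extensions g.2 hy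

theorem orbit_fixer_map_smul (g : G) (xs : List Ω) (y : Ω) :
    orbit (fixer G (xs.map (g • ·))) (g • y) = (g • ·) '' orbit (fixer G xs) y := by
  ext z
  constructor
  · rintro ⟨⟨k, hk⟩, rfl⟩
    refine ⟨_, ⟨⟨g⁻¹ * k * g, mem_fixer.mpr fun x hx => ?_⟩, rfl⟩, ?_⟩
    · simp [mul_smul, mem_fixer.mp hk _ (List.mem_map_of_mem hx)]
    · simp [Subgroup.smul_def, mul_smul]
  · rintro ⟨_, ⟨⟨k, hk⟩, rfl⟩, rfl⟩
    refine ⟨⟨g * k * g⁻¹, mem_fixer.mpr fun x hx => ?_⟩, ?_⟩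
    · obtain ⟨w, hw, rfl⟩ := List.mem_map.mp hx
      simp [mul_smul, mem_fixer.mp hk w hw]
    · simp [Subgroup.smul_def, mul_smul]

theorem IsHomogeneous.forall_orbit_ncard (hadj : PreservesAdj G adj)
    (hbs : IsHomogeneous G adj bs) {P : ℕ → Prop} (hxs : HasPattern adj bs xs)
    (hP : ∀ y ∈ extensions adj xs b, P (orbit (fixer G xs) y).ncard) (hys : HasPattern adj bs ys)
    (hy : y ∈ extensions adj ys b) : P (orbit (fixer G ys) y).ncard := by
  obtain ⟨g, rfl⟩ := hbs ys xs hys hxs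
  have := hP (g • y) ((hadj.smul_mem_extensions_iff g).mpr hy)
  rwa [orbit_fixer_map_smul, Set.ncard_image_of_injective _ (MulAction.injective g)] at this

theorem card_fixer_eq_ncard_orbit_mul (y : Ω) (xs : List Ω) :
    Nat.card (fixer G xs) = (orbit (fixer G xs) y).ncard * Nat.card (fixer G (y :: xs)) := by
  have hstab : (stabilizer (fixer G xs) y).map (fixer G xs).subtype = fixer G (y :: xs) := by
    ext g
    simp [mem_fixer, Subgroup.mem_map, and_comm]
  rw [← index_stabilizer, ← hstab, Subgroup.card_subtype, Subgroup.index_mul_card]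

theorem IsHomogeneous.ncard_extensions_eq (hadj : PreservesAdj G adj)
    (hbs : IsHomogeneous G adj bs) (hxs : HasPattern adj bs xs) (hys : HasPattern adj bs ys) :
    (extensions adj xs b).ncard = (extensions adj ys b).ncard := by
  obtain ⟨g, rfl⟩ := hbs xs ys hxs hys
  rw [← Set.ncard_image_of_injective _ (MulAction.injective g)]
  congr 1
  ext y
  rw [← smul_inv_smul g y, hadj.smul_mem_extensions_iff]
  exact (MulAction.injective g).mem_set_image

/-- The transitive action of `G` on the chains with patterns `bs` has `n` points. -/
structure HomogeneousOfIndex (G : Type*) [Group G] [MulAction G Ω] (adj : Ω → Ω → Prop)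
    (bs : List (List Bool)) (n : ℕ) : Prop where
  isHomogeneous : IsHomogeneous G adj bs
  card_eq : ∀ ⦃xs⦄, HasPattern adj bs xs → Nat.card G = n * Nat.card (fixer G xs)

namespace HomogeneousOfIndex

theorem nil : HomogeneousOfIndex G adj [] 1 where
  isHomogeneous
    | [], [], _, _ => ⟨1, rfl⟩
  card_eq
    | [], _ => by simp [fixer]

theorem cons {m n : ℕ} (h : HomogeneousOfIndex G adj bs n) (hadj : PreservesAdj G adj)
    (hxs : HasPattern adj bs xs)
    (htrans : ∀ y ∈ extensions adj xs b, extensions adj xs b ⊆ orbit (fixer G xs) y)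
    (hys : HasPattern adj bs ys) (hcard : (extensions adj ys b).ncard = m) :
    HomogeneousOfIndex G adj (b :: bs) (n * m) := by
  have hhom := h.isHomogeneous.cons hadj hxs htrans
  refine ⟨hhom, ?_⟩
  rintro (_ | ⟨z, zs⟩) hzs
  · exact hzs.elim
  have horbit : orbit (fixer G zs) z = extensions adj zs b :=
    (hadj.orbit_fixer_subset_extensions hzs.1).antisymm
      (hhom.extensions_subset_orbit hzs.2 hzs.1)
  rw [h.card_eq hzs.2, card_fixer_eq_ncard_orbit_mul z zs, horbit,
    h.isHomogeneous.ncard_extensions_eq hadj hzs.2 hys, hcard, mul_assoc]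

end HomogeneousOfIndex

theorem subset_orbit_of_ncard_le_three {D : Set Ω} (hfin : D.Finite) (hcard : D.ncard ≤ 3)
    (hD : ∀ g : G, ∀ y ∈ D, g • y ∈ D) {g : G} (hg : ∀ y ∈ D, g • y ≠ y) (hy : y ∈ D) :
    D ⊆ orbit G y := by
  intro z hz
  by_contra hzy
  have hne (h : G) : h • y ≠ z := fun e => hzy ⟨h, e⟩
  have hyz : y ≠ z := by simpa using hne 1
  have hygz : y ≠ g • z := by simpa [inv_smul_eq_iff] using hne g⁻¹
  have hfour : ({y, g • y, z, g • z} : Set Ω).ncard = 4 := by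
    rw [Set.ncard_insert_of_notMem, Set.ncard_insert_of_notMem, Set.ncard_pair (hg z hz).symm]
    · simp [hne g, hyz]
    · simp [hyz, hygz, (hg y hy).symm]
  have := Set.ncard_le_ncard (s := {y, g • y, z, g • z}) (t := D) (by grind) hfin
  omega

theorem dvd_ncard_of_minimalPeriod_eq {S : Set Ω} (hfin : S.Finite) {g : G} {n : ℕ}
    (hS : ∀ h ∈ Subgroup.zpowers g, ∀ y ∈ S, h • y ∈ S)
    (hg : ∀ y ∈ S, Function.minimalPeriod (g • ·) y = n) : n ∣ S.ncard := by
  induction hk : S.ncard using Nat.strong_induction_on generalizing S with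
  | _ k ih =>
    obtain rfl | ⟨y, hy⟩ := S.eq_empty_or_nonempty
    · simp [← hk]
    let cycle := orbit (Subgroup.zpowers g) y
    have hsub : cycle ⊆ S := by
      rintro _ ⟨h, rfl⟩
      exact hS h h.2 y hy
    have hcycle : cycle.ncard = n := by
      have := (hfin.subset hsub).fintype
      rw [← hg y hy, minimalPeriod_eq_card, ← Nat.card_eq_fintype_card, Nat.card_coe_set_eq]
    have hcycle_pos : 0 < cycle.ncard :=
      (Set.ncard_pos (hfin.subset hsub)).mpr ⟨y, mem_orbit_self y⟩
    have hsum := Set.ncard_sdiff_add_ncard_of_subset hsub hfin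
    have hrest : n ∣ (S \ cycle).ncard :=
      ih _ (by omega) hfin.sdiff
        (fun h hh z hz => ⟨hS h hh z hz.1, fun hmem => hz.2 ?_⟩) (fun z hz => hg z hz.1) rfl
    · rw [← hk, ← hsum, hcycle]
      exact hrest.add dvd_rfl
    · exact orbit_eq_iff.mp
        ((orbit_smul (⟨h, hh⟩ : Subgroup.zpowers g) z).symm.trans (orbit_eq_iff.mpr hmem))

end Homogeneous

/-! ### Arithmetic modulo a monic polynomial given by coefficient lists -/

section ModularArithmetic

variable {R A : Type*} [CommRing R] [CommRing A]

/-- The sum of two polynomials given by their coefficient lists. -/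
def addCoeffs : List R → List R → List R
  | [], m => m
  | l, [] => l
  | a :: l, b :: m => (a + b) :: addCoeffs l m

/-- Multiplication of `l` by the variable `X`, modulo the relation that replaces
`X ^ g.length` by `g`. -/
def mulXMod (g l : List R) : List R :=
  if l.length = g.length then addCoeffs (0 :: l.dropLast) (g.map (l.getLastD 0 * ·)) else 0 :: l

/-- Multiplication modulo the relation that replaces `X ^ g.length` by `g`. -/
def mulMod (g l m : List R) : List R :=
  l.foldr (fun a v => addCoeffs (m.map (a * ·)) (mulXMod g v)) []

/-- Powers modulo the relation that replaces `X ^ g.length` by `g`. -/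
def powMod (g : List R) (n : ℕ) (l : List R) : List R := (mulMod g l)^[n] [1]

theorem horner_map_mul_left (a : R) (l : List R) (x : R) :
    horner (l.map (a * ·)) x = a * horner l x := by
  induction l with
  | nil => simp
  | cons b l ih => simp only [List.map_cons, horner_cons, ih]; ring

theorem horner_append (l m : List R) (x : R) :
    horner (l ++ m) x = horner l x + x ^ l.length * horner m x := by
  induction l with
  | nil => simp
  | cons a l ih => simp only [List.cons_append, horner_cons, ih, List.length_cons]; ring

theorem horner_replicate_zero (n : ℕ) (x : R) : horner (.replicate n 0) x = 0 := by
  induction n <;> simp_all [List.replicate_succ]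

theorem pow_length_dropLast_eq_horner {l : List R} {x c : R} (hx : horner l x = 0)
    (hc : c * l.getLastD 0 = 1) : x ^ l.dropLast.length = horner (l.dropLast.map (-c * ·)) x := by
  rcases l.eq_nil_or_concat with rfl | ⟨m, a, rfl⟩
  · have : (0 : R) = 1 := by simpa using hc
    exact (subsingleton_of_zero_eq_one this).elim _ _
  · simp only [List.concat_eq_append, horner_append, horner_cons, horner_nil,
      List.getLastD_concat, List.dropLast_concat, horner_map_mul_left] at hx hc ⊢
    linear_combination -x ^ m.length * hc + c * hx

variable (φ : R →+* A) {g : List R} {β : A}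

theorem horner_map_addCoeffs (l m : List R) :
    horner ((addCoeffs l m).map φ) β = horner (l.map φ) β + horner (m.map φ) β := by
  induction l generalizing m with
  | nil => simp [addCoeffs]
  | cons a l ih =>
    cases m with
    | nil => simp [addCoeffs]
    | cons b m => simp only [addCoeffs, List.map_cons, horner_cons, ih, map_add]; ring

theorem horner_map_map_mul_left (a : R) (l : List R) :
    horner ((l.map (a * ·)).map φ) β = φ a * horner (l.map φ) β := by
  simp [← horner_map_mul_left, Function.comp_def]

theorem horner_map_mulXMod (hβ : β ^ g.length = horner (g.map φ) β) (l : List R) :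
    horner ((mulXMod g l).map φ) β = β * horner (l.map φ) β := by
  unfold mulXMod
  split_ifs with hlen
  · rcases l.eq_nil_or_concat with rfl | ⟨m, a, rfl⟩
    · simp_all [addCoeffs, List.length_eq_zero_iff.mp hlen.symm]
    · simp only [List.concat_eq_append, List.length_append, List.length_singleton] at hlen
      simp only [List.concat_eq_append, List.dropLast_concat, List.getLastD_concat,
        horner_map_addCoeffs, horner_map_map_mul_left, ← hβ, ← hlen, List.map_append,
        horner_append, List.map_cons, List.map_nil, horner_cons, horner_nil, map_zero,
        List.length_map]
      ring
  · simp

theorem horner_map_mulMod (hβ : β ^ g.length = horner (g.map φ) β) (l m : List R) :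
    horner ((mulMod g l m).map φ) β = horner (l.map φ) β * horner (m.map φ) β := by
  induction l with
  | nil => simp [mulMod]
  | cons a l ih =>
    rw [mulMod, List.foldr_cons, horner_map_addCoeffs, horner_map_map_mul_left,
      horner_map_mulXMod φ hβ, ← mulMod, ih, List.map_cons, horner_cons]
    ring

theorem horner_map_powMod (hβ : β ^ g.length = horner (g.map φ) β) (n : ℕ) (l : List R) :
    horner ((powMod g n l).map φ) β = horner (l.map φ) β ^ n := by
  induction n with
  | zero => simp [powMod]
  | succ n ih =>
    rw [powMod, Function.iterate_succ_apply', ← powMod, horner_map_mulMod φ hβ, ih, pow_succ']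

theorem horner_map_iterate_powMod (hβ : β ^ g.length = horner (g.map φ) β) (q n : ℕ) :
    horner (((powMod g q)^[n] [0, 1]).map φ) β = β ^ q ^ n := by
  induction n with
  | zero => simp
  | succ n ih =>
    rw [Function.iterate_succ_apply', horner_map_powMod φ hβ, ih, ← pow_mul, pow_succ]

end ModularArithmetic

/-! ### Reductions of the graph modulo primes -/

section Decidability

variable {α : Type*} [DecidableEq α] (adj : α → α → Prop) [DecidableRel adj]

instance (xs : List α) (b : List Bool) (y : α) : Decidable (y ∈ extensions adj xs b) :=
  inferInstanceAs (Decidable (_ ∧ _))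

instance decidableHasPattern : ∀ bs xs, Decidable (HasPattern adj bs xs)
  | [], [] => .isTrue trivial
  | _ :: bs, _ :: xs =>
    have := decidableHasPattern bs xs
    inferInstanceAs (Decidable (_ ∧ _))
  | [], _ :: _ => .isFalse id
  | _ :: _, [] => .isFalse id

end Decidability

/-- Adjacency of two points of a fibre. -/
abbrev graphAdj {R : Type*} [CommRing R] (x y : R) : Prop := graphPoly x y = 0

/-- The chain `cs` consists of points of the fibre over `s` and has the patterns `bs`. -/
abbrev IsFibreChain {R : Type*} [CommRing R] (s : R) (bs : List (List Bool)) (cs : List R) : Prop :=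
  (∀ c ∈ cs, fibre s c = 0) ∧ HasPattern graphAdj bs cs

/-- The relation satisfied by the neighbours of `b`, in the form expected by `mulMod`; here `c` is
the inverse of the leading coefficient of `graphPoly b X`. -/
def neighbourRelation {R : Type*} [CommRing R] (b c : R) : List R :=
  (graphCoeffs.map (intHorner · b)).dropLast.map (-c * ·)

theorem pow_length_neighbourRelation {R A : Type*} [CommRing R] [CommRing A] (φ : R →+* A)
    {b c : R} {β : A} (hc : c * intHorner (graphCoeffs.getLastD []) b = 1)
    (hβ : graphPoly (φ b) β = 0) :
    β ^ (neighbourRelation b c).length = horner ((neighbourRelation b c).map φ) β := by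
  have hrow : graphCoeffs.map (intHorner · (φ b)) = (graphCoeffs.map (intHorner · b)).map φ := by
    simp [map_intHorner]
  have hlead : ((graphCoeffs.map (intHorner · b)).map φ).getLastD 0 =
      φ (intHorner (graphCoeffs.getLastD []) b) := by
    simp [graphCoeffs]
  rw [graphPoly, intHorner₂, hrow] at hβ
  have := pow_length_dropLast_eq_horner hβ (c := φ c) (by rw [hlead, ← map_mul, hc, map_one])
  simpa [neighbourRelation, List.map_dropLast, Function.comp_def] using this

/-- An injective reduction of a `G`-invariant graph onto the fibre over `s` in characteristic `ℓ`,
together with an element of `G` which acts on the reductions by the Frobenius map. -/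
structure FrobeniusReduction (G : Type*) {Ω : Type*} [Group G] [MulAction G Ω]
    (adj : Ω → Ω → Prop) {ℓ : ℕ} (s : ZMod ℓ) where
  /-- the residue field -/
  κ : Type
  [field : Field κ]
  [algebra : Algebra (ZMod ℓ) κ]
  /-- the reduction map -/
  red : Ω → κ
  red_injective : red.Injective
  range_red : Set.range red = {x | fibre (algebraMap (ZMod ℓ) κ s) x = 0}
  graphAdj_iff : ∀ ⦃x y⦄, x ≠ y → (graphAdj (red x) (red y) ↔ adj x y)
  /-- the Frobenius element -/
  frob : G
  red_frob_smul : ∀ x, red (frob • x) = red x ^ ℓ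

attribute [instance] FrobeniusReduction.field FrobeniusReduction.algebra

namespace FrobeniusReduction

open MulAction Function

variable {G Ω : Type*} [Group G] [MulAction G Ω] {adj : Ω → Ω → Prop} {ℓ : ℕ} {s : ZMod ℓ}
  {bs : List (List Bool)} {b : List Bool} {xs : List Ω} {cs : List (ZMod ℓ)} {x y : Ω} {n : ℕ}

variable (R : FrobeniusReduction G adj s)

theorem exists_map_red_eq (hcs : ∀ c ∈ cs, fibre s c = 0) :
    ∃ xs : List Ω, xs.map R.red = cs.map (algebraMap (ZMod ℓ) R.κ) := by
  suffices h : cs.map (algebraMap (ZMod ℓ) R.κ) ∈ Set.range (List.map R.red) from h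
  rw [Set.range_list_map, R.range_red]
  simpa [← map_fibre] using fun c hc => by rw [hcs c hc, map_zero]

theorem exists_map_cons_red_eq {c : ZMod ℓ} (hcs : ∀ d ∈ c :: cs, fibre s d = 0) :
    ∃ x xs, (x :: xs).map R.red = (c :: cs).map (algebraMap (ZMod ℓ) R.κ) := by
  obtain ⟨_ | ⟨x, xs⟩, h⟩ := R.exists_map_red_eq hcs
  · simp at h
  · exact ⟨x, xs, h⟩

variable {R}

section Prime

variable [Fact ℓ.Prime]

theorem hasPattern_of_map_red_eq (hxs : xs.map R.red = cs.map (algebraMap (ZMod ℓ) R.κ))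
    (hcs : HasPattern graphAdj bs cs) : HasPattern adj bs xs := by
  rw [← hasPattern_map_iff R.red_injective R.graphAdj_iff, hxs]
  refine (hasPattern_map_iff (algebraMap (ZMod ℓ) R.κ).injective fun x y _ => ?_).mpr hcs
  rw [graphAdj, ← map_graphPoly, map_eq_zero]

theorem frob_mem_fixer (hxs : xs.map R.red = cs.map (algebraMap (ZMod ℓ) R.κ)) :
    R.frob ∈ fixer G xs := by
  refine mem_fixer.mpr fun x hx => R.red_injective ?_
  obtain ⟨c, -, hc⟩ := List.mem_map.mp (hxs ▸ List.mem_map_of_mem (f := R.red) hx)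
  rw [R.red_frob_smul, ← hc, ← map_pow, ZMod.pow_card]

theorem exists_red_eq_of_frob_smul_eq (hy : R.frob • y = y) :
    ∃ c, R.red y = algebraMap (ZMod ℓ) R.κ c := by
  have : CharP R.κ ℓ := charP_of_injective_algebraMap (algebraMap (ZMod ℓ) R.κ).injective ℓ
  have hpow : R.red y ^ ℓ = R.red y := by rw [← R.red_frob_smul, hy]
  obtain ⟨n, hn⟩ := (mem_bot_iff_intCast ℓ R.κ).mp
    ((Subfield.mem_bot_iff_pow_eq_self R.κ ℓ).mpr hpow)
  exact ⟨n, by simp [← hn]⟩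

theorem exists_mem_extensions_of_frob_smul_eq
    (hxs : xs.map R.red = cs.map (algebraMap (ZMod ℓ) R.κ)) (hy : y ∈ extensions adj xs b)
    (hfix : R.frob • y = y) :
    ∃ c ∈ extensions graphAdj cs b, fibre s c = 0 ∧ R.red y = algebraMap (ZMod ℓ) R.κ c := by
  obtain ⟨c, hc⟩ := exists_red_eq_of_frob_smul_eq hfix
  refine ⟨c, ?_, ?_, hc⟩
  · rw [← mem_extensions_map_iff R.red_injective R.graphAdj_iff, hxs, hc] at hy
    refine (mem_extensions_map_iff (algebraMap (ZMod ℓ) R.κ).injective fun x y _ => ?_).mp hy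
    rw [graphAdj, ← map_graphPoly, map_eq_zero]
  · have : R.red y ∈ Set.range R.red := ⟨y, rfl⟩
    rwa [R.range_red, hc, Set.mem_ofPred_eq, ← map_fibre, map_eq_zero] at this

theorem frob_smul_ne (hxs : xs.map R.red = cs.map (algebraMap (ZMod ℓ) R.κ))
    (hcs : ∀ c ∈ extensions graphAdj cs b, fibre s c ≠ 0) (hy : y ∈ extensions adj xs b) :
    R.frob • y ≠ y := fun hfix =>
  have ⟨c, hc, hfibre, _⟩ := exists_mem_extensions_of_frob_smul_eq hxs hy hfix
  hcs c hc hfibre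

theorem subsingleton_frob_smul_eq (hxs : xs.map R.red = cs.map (algebraMap (ZMod ℓ) R.κ))
    (hcs : ∀ c ∈ extensions graphAdj cs b, ∀ d ∈ extensions graphAdj cs b,
      fibre s c = 0 → fibre s d = 0 → c = d) :
    {z ∈ extensions adj xs b | R.frob • z = z}.Subsingleton := by
  rintro y ⟨hy, hyfix⟩ z ⟨hz, hzfix⟩
  obtain ⟨c, hc, hc0, hyc⟩ := exists_mem_extensions_of_frob_smul_eq hxs hy hyfix
  obtain ⟨d, hd, hd0, hzd⟩ := exists_mem_extensions_of_frob_smul_eq hxs hz hzfix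
  exact R.red_injective (by rw [hyc, hzd, hcs c hc d hd hc0 hd0])

end Prime

variable (R) in
theorem red_iterate_frob (n : ℕ) (y : Ω) : R.red ((R.frob • ·)^[n] y) = R.red y ^ ℓ ^ n := by
  induction n with
  | zero => simp
  | succ n ih => rw [iterate_succ_apply', R.red_frob_smul, ih, ← pow_mul, pow_succ]

section Neighbours

variable {c c' : ZMod ℓ} {k : ℕ}

theorem pow_length_red_eq
    (hxs : (x :: xs).map R.red = (c :: cs).map (algebraMap (ZMod ℓ) R.κ))
    (hc' : c' * intHorner (graphCoeffs.getLastD []) c = 1)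
    (hy : y ∈ extensions adj (x :: xs) (true :: b)) :
    R.red y ^ (neighbourRelation c c').length =
      horner ((neighbourRelation c c').map (algebraMap (ZMod ℓ) R.κ)) (R.red y) := by
  obtain ⟨hx, -⟩ := List.cons_eq_cons.mp hxs
  have hne : x ≠ y := fun h => hy.1 (by simp [h])
  have hadj : adj x y := by simpa using (List.forall₂_cons.mp hy.2).1
  exact pow_length_neighbourRelation _ hc' (hx ▸ (R.graphAdj_iff hne).mpr hadj)

theorem isPeriodicPt_frob
    (hxs : (x :: xs).map R.red = (c :: cs).map (algebraMap (ZMod ℓ) R.κ))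
    (hc' : c' * intHorner (graphCoeffs.getLastD []) c = 1)
    (hy : y ∈ extensions adj (x :: xs) (true :: b))
    (hpow : (powMod (neighbourRelation c c') ℓ)^[n] [0, 1] = 0 :: 1 :: .replicate k 0) :
    IsPeriodicPt (R.frob • ·) n y := by
  have := horner_map_iterate_powMod _ (pow_length_red_eq hxs hc' hy) ℓ n
  refine R.red_injective ?_
  rw [red_iterate_frob, ← this, hpow]
  simp [horner_replicate_zero]

theorem not_isPeriodicPt_frob
    (hxs : (x :: xs).map R.red = (c :: cs).map (algebraMap (ZMod ℓ) R.κ))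
    (hc' : c' * intHorner (graphCoeffs.getLastD []) c = 1)
    (hy : y ∈ extensions adj (x :: xs) (true :: b))
    {v : List (ZMod ℓ)} (hv : mulMod (neighbourRelation c c') v
      (addCoeffs ((powMod (neighbourRelation c c') ℓ)^[n] [0, 1]) [0, -1]) = 1 :: .replicate k 0) :
    ¬IsPeriodicPt (R.frob • ·) n y := by
  intro hper
  have hβ := pow_length_red_eq hxs hc' hy
  have hred : R.red y ^ ℓ ^ n = R.red y := by rw [← red_iterate_frob, hper.eq]
  have := horner_map_mulMod _ hβ v
    (addCoeffs ((powMod (neighbourRelation c c') ℓ)^[n] [0, 1]) [0, -1])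
  rw [hv, horner_map_addCoeffs, horner_map_iterate_powMod _ hβ, hred] at this
  simp [horner_replicate_zero] at this

theorem minimalPeriod_frob_eq_prime {p : ℕ} [Fact p.Prime]
    (hxs : (x :: xs).map R.red = (c :: cs).map (algebraMap (ZMod ℓ) R.κ))
    (hc' : c' * intHorner (graphCoeffs.getLastD []) c = 1)
    (hpow : (powMod (neighbourRelation c c') ℓ)^[p] [0, 1] = 0 :: 1 :: .replicate k 0)
    (hy : y ∈ extensions adj (x :: xs) (true :: b)) (hfix : R.frob • y ≠ y) :
    minimalPeriod (R.frob • ·) y = p :=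
  minimalPeriod_eq_prime (isPeriodicPt_frob hxs hc' hy hpow) hfix

end Neighbours

end FrobeniusReduction

namespace FrobeniusReduction

open MulAction Function

variable {G Ω : Type*} [Group G] [MulAction G Ω] [Finite Ω] {adj : Ω → Ω → Prop} {ℓ : ℕ}
  [Fact ℓ.Prime] {s : ZMod ℓ} {bs : List (List Bool)} {b : List Bool} {xs ys : List Ω}
  {cs : List (ZMod ℓ)} {y : Ω} {n : ℕ}

theorem homogeneousOfIndex_cons {m : ℕ} (R : FrobeniusReduction G adj s)
    (h : HomogeneousOfIndex G adj bs n) (hadj : PreservesAdj G adj) (hcs : IsFibreChain s bs cs)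
    (hirrational : ∀ c ∈ extensions graphAdj cs b, fibre s c ≠ 0) (hys : HasPattern adj bs ys)
    (hcard : (extensions adj ys b).ncard = m) (hm : m ≤ 3) :
    HomogeneousOfIndex G adj (b :: bs) (n * m) := by
  obtain ⟨xs, hxs⟩ := R.exists_map_red_eq hcs.1
  have hpattern := hasPattern_of_map_red_eq hxs hcs.2
  refine h.cons hadj hpattern (fun y hy => ?_) hys hcard
  refine subset_orbit_of_ncard_le_three (g := ⟨R.frob, frob_mem_fixer hxs⟩) (Set.toFinite _) ?_
    (fun g z hz => hadj.smul_mem_extensions g.2 hz) (fun z hz => ?_) hy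
  · rwa [h.isHomogeneous.ncard_extensions_eq hadj hpattern hys, hcard]
  · exact frob_smul_ne hxs hirrational hz

variable {R : FrobeniusReduction G adj s}

theorem dvd_ncard_orbit_sep_frob_smul_ne (hadj : PreservesAdj G adj)
    (hxs : xs.map R.red = cs.map (algebraMap (ZMod ℓ) R.κ))
    (hperiod : ∀ z ∈ extensions adj xs b, R.frob • z ≠ z → minimalPeriod (R.frob • ·) z = n)
    (hy : y ∈ extensions adj xs b) :
    n ∣ {z ∈ orbit (fixer G xs) y | R.frob • z ≠ z}.ncard := by
  refine dvd_ncard_of_minimalPeriod_eq (g := R.frob) (Set.toFinite _) (fun h hh z hz => ⟨?_, ?_⟩)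
    fun z hz => hperiod z (hadj.orbit_fixer_subset_extensions hy hz.1) hz.2
  · have hfixer := (Subgroup.zpowers_le.mpr (frob_mem_fixer hxs)) hh
    exact mem_orbit_of_mem_orbit (⟨h, hfixer⟩ : fixer G xs) hz.1
  · obtain ⟨i, rfl⟩ := Subgroup.mem_zpowers_iff.mp hh
    rw [← mul_smul, (Commute.refl R.frob).zpow_right i, mul_smul]
    exact (MulAction.injective _).ne hz.2

theorem dvd_ncard_orbit (hhom : IsHomogeneous G adj bs) (hadj : PreservesAdj G adj)
    (hxs : xs.map R.red = cs.map (algebraMap (ZMod ℓ) R.κ)) (hcs : HasPattern graphAdj bs cs)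
    (hperiod : ∀ z ∈ extensions adj xs b, minimalPeriod (R.frob • ·) z = n)
    (hys : HasPattern adj bs ys) (hy : y ∈ extensions adj ys b) :
    n ∣ (orbit (fixer G ys) y).ncard := by
  refine hhom.forall_orbit_ncard hadj (hasPattern_of_map_red_eq hxs hcs) (fun z hz => ?_) hys hy
  obtain rfl | hn := eq_or_ne n 1
  · exact one_dvd _
  have hfree : ∀ w ∈ orbit (fixer G xs) z, R.frob • w ≠ w := fun w hw hfix =>
    hn <| (hperiod w (hadj.orbit_fixer_subset_extensions hz hw)).symm.trans
      (minimalPeriod_eq_one_iff_isFixedPt.mpr hfix)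
  rw [← Set.sep_eq_self_iff_mem_true.mpr hfree]
  exact dvd_ncard_orbit_sep_frob_smul_ne hadj hxs (fun w hw _ => hperiod w hw) hz

theorem ncard_orbit_mod_le_one (hhom : IsHomogeneous G adj bs) (hadj : PreservesAdj G adj)
    (hxs : xs.map R.red = cs.map (algebraMap (ZMod ℓ) R.κ)) (hcs : HasPattern graphAdj bs cs)
    (hfixed : {z ∈ extensions adj xs b | R.frob • z = z}.Subsingleton)
    (hperiod : ∀ z ∈ extensions adj xs b, R.frob • z ≠ z → minimalPeriod (R.frob • ·) z = n)
    (hys : HasPattern adj bs ys) (hy : y ∈ extensions adj ys b) :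
    (orbit (fixer G ys) y).ncard % n ≤ 1 := by
  refine hhom.forall_orbit_ncard hadj (P := (· % n ≤ 1)) (hasPattern_of_map_red_eq hxs hcs)
    (fun z hz => ?_) hys hy
  obtain ⟨k, hk⟩ := dvd_ncard_orbit_sep_frob_smul_ne hadj hxs hperiod hz
  have hsub : {w ∈ orbit (fixer G xs) z | R.frob • w = w} ⊆
      {z ∈ extensions adj xs b | R.frob • z = z} :=
    fun w hw => ⟨hadj.orbit_fixer_subset_extensions hz hw.1, hw.2⟩
  have hone := Set.ncard_le_one_iff_subsingleton.mpr (hfixed.anti hsub)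
  have hsplit := Set.ncard_inter_add_ncard_sdiff_eq_ncard (orbit (fixer G xs) z)
    {w | R.frob • w = w}
  calc (orbit (fixer G xs) z).ncard % n
      = ({w ∈ orbit (fixer G xs) z | R.frob • w = w}.ncard + n * k) % n := by
        rw [← hk, ← hsplit]; rfl
    _ ≤ 1 := by rw [Nat.add_mul_mod_self_left]; exact (Nat.mod_le _ _).trans hone

end FrobeniusReduction

/-! ### The graph of hexads -/

/-- The `77` hexads of a Steiner system `S(3, 6, 22)`, as bit masks on the `22` points. The points
are the cocliques of size `21` in the graph on the fibre over `3090` modulo `5273`. -/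
def hexad (i : Fin 77) : ℕ :=
  [37344, 328578, 786459, 2166819, 656208, 22609, 807456, 25284, 13065, 3148809, 602256,
    1132704, 2236437, 43139, 1314949, 1344546, 1122318, 405570, 217348, 327796, 2367656,
    1581153, 2392641, 592389, 442512, 49197, 2179608, 366600, 2364688, 2173248, 1147153,
    2377734, 2631170, 1590292, 199698, 1579266, 21642, 3145938, 2235008, 395553, 1183800,
    2666, 1351, 2625612, 353281, 196809, 2638209, 2245728, 2261258, 655526, 1119808, 639042,
    1321488, 24882, 15396, 1713, 2460, 693249, 42072, 37398, 238112, 1327432, 827652, 3146532,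
    1196547, 1214532, 394764, 591144, 2196612, 1189248, 681992, 1606280, 2656304, 789696,
    52992, 3207168, 4128768][i]

/-- The rational points of the fibre over `3090` modulo `5273`, labelled by the hexads. -/
def hexadPoint (i : Fin 77) : ZMod 5273 :=
  [31, 237, 242, 293, 313, 314, 422, 472, 549, 624, 744, 759, 884, 1061, 1101, 1196, 1216,
    1325, 1412, 1451, 1456, 1569, 1644, 1676, 1690, 1702, 1783, 1785, 1789, 1802, 1924, 1941,
    1985, 1989, 2043, 2166, 2212, 2281, 2404, 2425, 2517, 2628, 2745, 2815, 3008, 3090, 3165,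
    3235, 3240, 3278, 3307, 3324, 3380, 3692, 3812, 3818, 3825, 3903, 3923, 3931, 3979, 4181,
    4344, 4364, 4380, 4413, 4420, 4530, 4612, 4774, 4816, 4969, 5180, 5194, 5196, 5236, 5271][i]

/-- Disjointness of hexads. -/
abbrev hexadAdj (i j : Fin 77) : Prop := hexad i &&& hexad j = 0

theorem fibre_hexadPoint : ∀ i, fibre 3090 (hexadPoint i) = 0 := by
  decide +kernel

theorem hexadPoint_injective : hexadPoint.Injective := by
  decide +kernel

theorem graphAdj_hexadPoint_iff :
    ∀ i j, i ≠ j → (graphAdj (hexadPoint i) (hexadPoint j) ↔ hexadAdj i j) := by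
  decide +kernel

section Labelling

open MulAction

variable {G Ω : Type*} [Group G] [MulAction G Ω] {adj : Ω → Ω → Prop}

/-- The bijection `e` identifies the graph of hexads with the graph `adj`. -/
structure IsHexadLabelling (adj : Ω → Ω → Prop) (e : Fin 77 → Ω) : Prop where
  bijective : e.Bijective
  adj_iff : ∀ ⦃i j⦄, i ≠ j → (adj (e i) (e j) ↔ hexadAdj i j)

theorem FrobeniusReduction.exists_isHexadLabelling [Fact (Nat.Prime 5273)]
    (R : FrobeniusReduction G adj (3090 : ZMod 5273)) (hΩ : Nat.card Ω = 77) :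
    ∃ e, IsHexadLabelling adj e := by
  let ι := algebraMap (ZMod 5273) R.κ
  have hlift (i : Fin 77) : ι (hexadPoint i) ∈ Set.range R.red := by
    rw [R.range_red, Set.mem_ofPred_eq, ← map_fibre, fibre_hexadPoint, map_zero]
  choose e he using hlift
  have he_inj : e.Injective := fun i j hij =>
    hexadPoint_injective (ι.injective (by rw [← he, ← he, hij]))
  have : Finite Ω := Nat.finite_of_card_ne_zero (by omega)
  refine ⟨e, he_inj.bijective_of_nat_card_le (by simp [hΩ]), fun i j hij => ?_⟩
  rw [← R.graphAdj_iff (he_inj.ne hij), he, he, ← graphAdj_hexadPoint_iff i j hij, graphAdj,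
    ← map_graphPoly, map_eq_zero]

/-- The adjacency of `y` to the members of `S`, encoded in binary. -/
def trace (S : List (Fin 77)) (y : Fin 77) : ℕ :=
  S.foldr (fun x v => 2 * v + if hexadAdj x y then 1 else 0) 0

/-- The members of `S`, and the hexads determined by their trace on `S`. -/
def traceClosure (S : List (Fin 77)) : List (Fin 77) :=
  (List.finRange 77).filter fun y => y ∈ S ∨ ∀ z, trace S z = trace S y → z ∈ S ∨ z = y

theorem trace_congr {S : List (Fin 77)} {y z : Fin 77}
    (h : ∀ x ∈ S, hexadAdj x z ↔ hexadAdj x y) : trace S z = trace S y :=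
  List.foldr_ext _ _ _ fun x hx v => by simp only [h x hx]

namespace IsHexadLabelling

variable {e : Fin 77 → Ω}

theorem hasPattern_map_iff (he : IsHexadLabelling adj e) {bs : List (List Bool)}
    {cs : List (Fin 77)} : HasPattern adj bs (cs.map e) ↔ HasPattern hexadAdj bs cs :=
  BelyiM22.hasPattern_map_iff he.bijective.injective he.adj_iff

theorem ncard_extensions (he : IsHexadLabelling adj e) (cs : List (Fin 77)) (b : List Bool) :
    (extensions adj (cs.map e) b).ncard = Fintype.card {i // i ∈ extensions hexadAdj cs b} := by
  rw [← Nat.card_eq_fintype_card, ← Set.coe_ofPred, Nat.card_coe_set_eq,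
    ← Set.ncard_preimage_of_injective_subset_range he.bijective.injective
      (by simp [he.bijective.surjective.range_eq])]
  congr 1
  ext i
  exact mem_extensions_map_iff he.bijective.injective he.adj_iff

theorem smul_eq_of_mem_traceClosure (he : IsHexadLabelling adj e) (hadj : PreservesAdj G adj)
    {S : List (Fin 77)} {g : G} (hg : ∀ i ∈ S, g • e i = e i) :
    ∀ i ∈ traceClosure S, g • e i = e i := by
  intro i hi
  by_cases hiS : i ∈ S
  · exact hg i hiS
  obtain ⟨j, hj⟩ := he.bijective.surjective (g • e i)
  have hjS : j ∉ S := fun hjS => hiS <| by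
    rwa [← he.bijective.injective (MulAction.injective g ((hg j hjS).trans hj))]
  have htrace : trace S j = trace S i := trace_congr fun x hx => by
    rw [← he.adj_iff (ne_of_mem_of_not_mem hx hjS), ← he.adj_iff (ne_of_mem_of_not_mem hx hiS), hj]
    simpa [hg x hx] using hadj g (e x) (e i)
  have hdetermined : ∀ z, trace S z = trace S i → z ∈ S ∨ z = i := by
    simpa [traceClosure, hiS] using hi
  rw [← hj, (hdetermined j htrace).resolve_left hjS]

theorem smul_eq_of_mem_iterate_traceClosure (he : IsHexadLabelling adj e)
    (hadj : PreservesAdj G adj) {S : List (Fin 77)} {g : G} (hg : ∀ i ∈ S, g • e i = e i)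
    (n : ℕ) : ∀ i ∈ traceClosure^[n] S, g • e i = e i := by
  induction n with
  | zero => exact hg
  | succ n ih =>
    rw [Function.iterate_succ_apply']
    exact he.smul_eq_of_mem_traceClosure hadj ih

end IsHexadLabelling

end Labelling

/-! ### The order of the group -/

/-- The adjacency patterns, newest first, of a chain of eight hexads without symmetries. -/
def basePatterns : List (List Bool) :=
  [[false, false, true, false, false, false, true], [true, false, false, false, true, false],
    [true, false, true, false, false], [true, false, true, false], [true, false, true],
    [true, false], [true], []]

/-- A chain of hexads with the patterns `basePatterns`. -/
def hexadBase : List (Fin 77) := [32, 29, 15, 18, 9, 7, 2, 0]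

theorem hasPattern_hexadBase : HasPattern hexadAdj basePatterns hexadBase := by
  decide +kernel

theorem iterate_traceClosure_hexadBase : traceClosure^[2] hexadBase = List.finRange 77 := by
  decide +kernel

section Order

open MulAction FrobeniusReduction

instance : Fact (Nat.Prime 5) := ⟨by norm_num⟩
instance : Fact (Nat.Prime 13) := ⟨by norm_num⟩
instance : Fact (Nat.Prime 19) := ⟨by norm_num⟩
instance : Fact (Nat.Prime 23) := ⟨by norm_num⟩
instance : Fact (Nat.Prime 103) := ⟨by norm_num⟩
instance : Fact (Nat.Prime 379) := ⟨by norm_num⟩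
instance : Fact (Nat.Prime 5273) := ⟨by norm_num⟩

variable {G Ω : Type*} [Group G] [MulAction G Ω] {adj : Ω → Ω → Prop} {bs : List (List Bool)}
  {b : List Bool} {ys : List Ω} {n : ℕ}

theorem homogeneousOfIndex_singleton [IsPretransitive G Ω] (hadj : PreservesAdj G adj) :
    HomogeneousOfIndex G adj [[]] (Nat.card Ω) := by
  have hextensions : extensions adj [] [] = Set.univ := by ext; simp [extensions]
  have htrans (y : Ω) : extensions adj [] [] ⊆ orbit (fixer G ([] : List Ω)) y := fun z _ =>
    have ⟨g, hg⟩ := exists_smul_eq G y z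
    ⟨⟨g, by simp [mem_fixer]⟩, hg⟩
  have := HomogeneousOfIndex.nil.cons hadj (xs := []) trivial (fun y _ => htrans y) (ys := [])
    trivial rfl
  rwa [one_mul, hextensions, Set.ncard_univ] at this

theorem HomogeneousOfIndex.cons_of_forall_ncard_orbit [Finite Ω] {m : ℕ}
    (h : HomogeneousOfIndex G adj bs n) (hadj : PreservesAdj G adj) (hys : HasPattern adj bs ys)
    (hcard : (extensions adj ys b).ncard = m)
    (horbit : ∀ y ∈ extensions adj ys b, (orbit (fixer G ys) y).ncard = m) :
    HomogeneousOfIndex G adj (b :: bs) (n * m) := by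
  refine h.cons hadj hys (fun y hy => ?_) hys hcard
  refine (Set.eq_of_subset_of_ncard_le (hadj.orbit_fixer_subset_extensions hy) ?_).superset
  rw [hcard, horbit y hy]

theorem homogeneousOfIndex_sixteen [Finite Ω] (h : HomogeneousOfIndex G adj [[]] n)
    (hadj : PreservesAdj G adj) (R₁₃ : FrobeniusReduction G adj (3 : ZMod 13))
    (R₂₃ : FrobeniusReduction G adj (1 : ZMod 23)) (hys : HasPattern adj [[]] ys)
    (hcard : (extensions adj ys [true]).ncard = 16) :
    HomogeneousOfIndex G adj [[true], []] (n * 16) := by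
  refine h.cons_of_forall_ncard_orbit hadj hys hcard fun y hy => ?_
  have hmod_five : (orbit (fixer G ys) y).ncard % 5 ≤ 1 := by
    have hchain : IsFibreChain (3 : ZMod 13) [[]] [0] := by decide +kernel
    obtain ⟨x, xs, hxs⟩ := R₁₃.exists_map_cons_red_eq hchain.1
    refine ncard_orbit_mod_le_one h.isHomogeneous hadj hxs hchain.2 ?_ ?_ hys hy
    · exact subsingleton_frob_smul_eq hxs (by decide +kernel)
    · exact fun z hz hfix => minimalPeriod_frob_eq_prime (c' := 9) (p := 5) (k := 14) hxs
        (by decide +kernel) (by decide +kernel) hz hfix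
  have hfour : 4 ∣ (orbit (fixer G ys) y).ncard := by
    have hchain : IsFibreChain (1 : ZMod 23) [[]] [2] := by decide +kernel
    obtain ⟨x, xs, hxs⟩ := R₂₃.exists_map_cons_red_eq hchain.1
    have hinv : 2 * intHorner (graphCoeffs.getLastD []) (2 : ZMod 23) = 1 := by decide +kernel
    refine dvd_ncard_orbit h.isHomogeneous hadj hxs hchain.2 (fun z hz => ?_) hys hy
    refine Function.minimalPeriod_eq_prime_pow (p := 2) (k := 1) (not_isPeriodicPt_frob
      (v := [20, 9, 4, 20, 5, 0, 21, 12, 17, 19, 7, 17, 14, 12, 11, 17]) (k := 15)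
      hxs hinv hz (by decide +kernel)) ?_
    exact isPeriodicPt_frob (k := 14) hxs hinv hz (by decide +kernel)
  have hpos : 0 < (orbit (fixer G ys) y).ncard :=
    (Set.ncard_pos (Set.toFinite _)).mpr ⟨y, mem_orbit_self y⟩
  have hle := Set.ncard_le_ncard (hadj.orbit_fixer_subset_extensions hy) (Set.toFinite _)
  rw [hcard] at hle
  interval_cases (orbit (fixer G ys) y).ncard <;> simp_all

theorem homogeneousOfIndex_fifteen [Finite Ω]
    (h : HomogeneousOfIndex G adj [[true], []] n) (hadj : PreservesAdj G adj)
    (R₁₃ : FrobeniusReduction G adj (3 : ZMod 13)) (R₁₉ : FrobeniusReduction G adj (4 : ZMod 19))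
    (hys : HasPattern adj [[true], []] ys)
    (hcard : (extensions adj ys [true, false]).ncard = 15) :
    HomogeneousOfIndex G adj [[true, false], [true], []] (n * 15) := by
  refine h.cons_of_forall_ncard_orbit hadj hys hcard fun y hy => ?_
  have hfive : 5 ∣ (orbit (fixer G ys) y).ncard := by
    have hchain : IsFibreChain (3 : ZMod 13) [[true], []] [0, 7] := by decide +kernel
    obtain ⟨x, xs, hxs⟩ := R₁₃.exists_map_cons_red_eq hchain.1
    refine dvd_ncard_orbit h.isHomogeneous hadj hxs hchain.2 (fun z hz => ?_) hys hy
    exact minimalPeriod_frob_eq_prime (c' := 9) (k := 14) hxs (by decide +kernel)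
      (by decide +kernel) hz (frob_smul_ne hxs (by decide +kernel) hz)
  have hthree : 3 ∣ (orbit (fixer G ys) y).ncard := by
    have hchain : IsFibreChain (4 : ZMod 19) [[true], []] [0, 12] := by decide +kernel
    obtain ⟨x, xs, hxs⟩ := R₁₉.exists_map_cons_red_eq hchain.1
    refine dvd_ncard_orbit h.isHomogeneous hadj hxs hchain.2 (fun z hz => ?_) hys hy
    exact minimalPeriod_frob_eq_prime (c' := 6) (k := 14) hxs (by decide +kernel)
      (by decide +kernel) hz (frob_smul_ne hxs (by decide +kernel) hz)
  have hpos : 0 < (orbit (fixer G ys) y).ncard :=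
    (Set.ncard_pos (Set.toFinite _)).mpr ⟨y, mem_orbit_self y⟩
  have hle := Set.ncard_le_ncard (hadj.orbit_fixer_subset_extensions hy) (Set.toFinite _)
  omega

theorem homogeneousOfIndex_basePatterns [Finite Ω] [IsPretransitive G Ω] (hΩ : Nat.card Ω = 77)
    (hadj : PreservesAdj G adj)
    (hR : ∀ {ℓ : ℕ} [Fact ℓ.Prime] (s : ZMod ℓ), IsRegularValue s →
      Nonempty (FrobeniusReduction G adj s)) {e : Fin 77 → Ω} (he : IsHexadLabelling adj e) :
    HomogeneousOfIndex G adj basePatterns 887040 := by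
  obtain ⟨R₁₃⟩ := hR (3 : ZMod 13) ⟨by decide, by decide, by decide⟩
  obtain ⟨R₁₉⟩ := hR (4 : ZMod 19) ⟨by decide, by decide, by decide⟩
  obtain ⟨R₂₃⟩ := hR (1 : ZMod 23) ⟨by decide, by decide, by decide⟩
  obtain ⟨R₁₀₃⟩ := hR (30 : ZMod 103) ⟨by decide, by decide, by decide⟩
  obtain ⟨R₃₇₉⟩ := hR (180 : ZMod 379) ⟨by decide, by decide, by decide⟩
  have hpattern {bs : List (List Bool)} (hs : List (Fin 77)) (h : HasPattern hexadAdj bs hs) :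
      HasPattern adj bs (hs.map e) := he.hasPattern_map_iff.mpr h
  have hncard {b : List Bool} {hs : List (Fin 77)} {m : ℕ}
      (h : Fintype.card {i // i ∈ extensions hexadAdj hs b} = m) :
      (extensions adj (hs.map e) b).ncard = m := (he.ncard_extensions hs b).trans h
  have h₁ : HomogeneousOfIndex G adj [[]] 77 := hΩ ▸ homogeneousOfIndex_singleton hadj
  have h₂ := homogeneousOfIndex_sixteen h₁ hadj R₁₃ R₂₃ (hpattern [0] (by decide))
    (hncard (by decide +kernel))
  have h₃ := homogeneousOfIndex_fifteen h₂ hadj R₁₃ R₁₉ (hpattern [2, 0] (by decide))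
    (hncard (by decide +kernel))
  have h₄ := R₁₉.homogeneousOfIndex_cons (b := [true, false, true]) (cs := [2, 12, 0]) (m := 3)
    h₃ hadj (by decide +kernel) (by decide +kernel) (hpattern [7, 2, 0] (by decide +kernel))
    (hncard (by decide +kernel)) (by decide)
  have h₅ := R₂₃.homogeneousOfIndex_cons (b := [true, false, true, false])
    (cs := [21, 15, 16, 1]) (m := 2) h₄ hadj (by decide +kernel) (by decide +kernel)
    (hpattern [9, 7, 2, 0] (by decide +kernel)) (hncard (by decide +kernel)) (by decide)
  have h₆ := R₁₀₃.homogeneousOfIndex_cons (b := [true, false, true, false, false])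
    (cs := [41, 43, 20, 27, 12]) (m := 2) h₅ hadj (by decide +kernel) (by decide +kernel)
    (hpattern [18, 9, 7, 2, 0] (by decide +kernel)) (hncard (by decide +kernel)) (by decide)
  have h₇ := R₁₀₃.homogeneousOfIndex_cons (b := [true, false, false, false, true, false])
    (cs := [38, 87, 43, 20, 27, 12]) (m := 2) h₆ hadj (by decide +kernel) (by decide +kernel)
    (hpattern [15, 18, 9, 7, 2, 0] (by decide +kernel)) (hncard (by decide +kernel)) (by decide)
  exact R₃₇₉.homogeneousOfIndex_cons (b := [false, false, true, false, false, false, true])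
    (cs := [192, 0, 260, 355, 158, 69, 49]) (m := 2) h₇ hadj (by decide +kernel)
    (by decide +kernel) (hpattern [29, 15, 18, 9, 7, 2, 0] (by decide +kernel))
    (hncard (by decide +kernel)) (by decide)

theorem IsHexadLabelling.fixer_hexadBase_eq_bot [FaithfulSMul G Ω] {e : Fin 77 → Ω}
    (he : IsHexadLabelling adj e) (hadj : PreservesAdj G adj) :
    fixer G (hexadBase.map e) = ⊥ := by
  refine (Subgroup.eq_bot_iff_forall _).mpr fun g hg => ?_
  refine FaithfulSMul.eq_of_smul_eq_smul fun x : Ω => ?_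
  obtain ⟨i, rfl⟩ := he.bijective.surjective x
  rw [one_smul]
  refine he.smul_eq_of_mem_iterate_traceClosure hadj (S := hexadBase) (fun j hj => ?_) 2 i
    (iterate_traceClosure_hexadBase ▸ List.mem_finRange i)
  exact mem_fixer.mp hg _ (List.mem_map_of_mem hj)

theorem card_eq_of_frobeniusReduction [FaithfulSMul G Ω] [IsPretransitive G Ω]
    (hΩ : Nat.card Ω = 77) (hadj : PreservesAdj G adj)
    (hR : ∀ {ℓ : ℕ} [Fact ℓ.Prime] (s : ZMod ℓ), IsRegularValue s →
      Nonempty (FrobeniusReduction G adj s)) : Nat.card G = 887040 := by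
  have : Finite Ω := Nat.finite_of_card_ne_zero (by omega)
  obtain ⟨R⟩ := hR (3090 : ZMod 5273)
    ⟨by decide +kernel, by decide +kernel, by decide +kernel⟩
  obtain ⟨e, he⟩ := R.exists_isHexadLabelling hΩ
  have hhom := homogeneousOfIndex_basePatterns hΩ hadj hR he
  rw [hhom.card_eq (he.hasPattern_map_iff.mpr hasPattern_hexadBase),
    he.fixer_hexadBase_eq_bot hadj, Subgroup.card_bot, mul_one]

end Order

/-! ### Reduction of the roots at a prime of the base -/

section FrobeniusLift

universe u

theorem exists_algEquiv_lifts_frobenius {A K : Type*} {L : Type u} [CommRing A] [IsDomain A]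
    [IsNoetherianRing A] [IsIntegrallyClosed A] [Field K] [Field L] [Algebra A K]
    [IsFractionRing A K] [Algebra K L] [Algebra A L] [IsScalarTower A K L] [FiniteDimensional K L]
    [IsGalois K L] {ℓ : ℕ} [Fact ℓ.Prime] (φ : A →+* ZMod ℓ) :
    ∃ (κ : Type u) (_ : Field κ) (_ : Algebra (ZMod ℓ) κ) (ψ : integralClosure A L →+* κ)
      (σ : L ≃ₐ[K] L), (∀ a, ψ (algebraMap A _ a) = algebraMap (ZMod ℓ) κ (φ a)) ∧
      ∀ x y : integralClosure A L, (y : L) = σ x → ψ y = ψ x ^ ℓ := by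
  let S := integralClosure A L
  let : MulSemiringAction (L ≃ₐ[K] L) S := IsIntegralClosure.MulSemiringAction A K L S
  have : IsFractionRing S L := integralClosure.isFractionRing_of_finite_extension K L
  have : Algebra.IsInvariant A S (L ≃ₐ[K] L) := Algebra.isInvariant_of_isGalois A K L S
  have : Module.Finite A S := IsIntegralClosure.finite A K L S
  have : FaithfulSMul A L := by
    rw [faithfulSMul_iff_algebraMap_injective, IsScalarTower.algebraMap_eq A K L]
    exact (algebraMap K L).injective.comp (IsFractionRing.injective A K)
  have hφ : Function.Surjective φ := ZMod.ringHom_surjective φ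
  have : (RingHom.ker φ).IsPrime := RingHom.ker_isPrime φ
  let e : A ⧸ RingHom.ker φ ≃+* ZMod ℓ := RingHom.quotientKerEquivOfSurjective hφ
  have : Finite (A ⧸ RingHom.ker φ) := Finite.of_equiv _ e.symm.toEquiv
  obtain ⟨⟨Q, _, hQ⟩⟩ := (RingHom.ker φ).nonempty_primesOver (S := S)
  have : Module.Finite (A ⧸ RingHom.ker φ) (S ⧸ Q) := .of_restrictScalars_finite A _ _
  have : Finite (S ⧸ Q) := Module.finite_of_finite (A ⧸ RingHom.ker φ)
  have : Q.IsMaximal := Ideal.Quotient.maximal_of_isField _ (Finite.isField_of_domain (S ⧸ Q))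
  have : SMulCommClass (L ≃ₐ[K] L) A S := ⟨fun g a x => map_smul (galRestrict A K L S g) a x⟩
  obtain ⟨σ, hσ⟩ := IsArithFrobAt.exists_of_isInvariant A (L ≃ₐ[K] L) Q
  have hker : RingHom.ker φ ≤ RingHom.ker ((Ideal.Quotient.mk Q).comp (algebraMap A S)) := by
    rw [← RingHom.comap_ker, Ideal.mk_ker]
    exact hQ.over.le
  refine ⟨S ⧸ Q, Ideal.Quotient.field Q, (φ.liftOfSurjective hφ ⟨_, hker⟩).toAlgebra,
    Ideal.Quotient.mk Q, σ, fun a => (φ.liftOfRightInverse_comp_apply _ _ ⟨_, hker⟩ a).symm, ?_⟩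
  intro x y hy
  have hcard : Nat.card (A ⧸ Q.under A) = ℓ := by
    rw [← hQ.over, Nat.card_congr e.toEquiv, Nat.card_zmod]
  obtain rfl : y = σ • x := Subtype.ext (hy.trans (algebraMap_galRestrict_apply A σ x).symm)
  rw [← map_pow, Ideal.Quotient.eq, ← hcard]
  exact hσ x

end FrobeniusLift

section RootReduction

section Degree

variable {R : Type*} [CommRing R]

theorem septic_X_eq : (septic X : R[X]) = X ^ 7 - 2 * X ^ 6 - 14 * X ^ 5 - 8 * X ^ 4 -
    26 * X ^ 3 + 45 * X ^ 2 + 2 * X - 3 := by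
  simp [septic, intHorner, horner]
  ring

theorem monic_septic_X : (septic X : R[X]).Monic := by
  rw [septic_X_eq]
  monicity!

theorem natDegree_sqrtNegR_X_le : (sqrtNegR X : R[X]).natDegree ≤ 38 := by
  simp only [sqrtNegR, quadruplePart, doublePart, intHorner, horner, List.map, List.foldr,
    Int.cast_neg, Int.cast_ofNat, Int.cast_one, mul_zero, add_zero]
  compute_degree

variable [Nontrivial R]

theorem natDegree_septic_X_pow : (septic X ^ 11 : R[X]).natDegree = 77 := by
  have : (septic X : R[X]).natDegree = 7 := by
    rw [septic_X_eq]
    compute_degree!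
  rw [monic_septic_X.natDegree_pow, this]

theorem natDegree_C_mul_sqrtNegR_X_sq_lt (s : R) :
    (C s * sqrtNegR X ^ 2).natDegree < (septic X ^ 11 : R[X]).natDegree := by
  rw [natDegree_septic_X_pow]
  exact ((natDegree_C_mul_le _ _).trans (natDegree_pow_le_of_le 2 natDegree_sqrtNegR_X_le)).trans_lt
    (by norm_num)

theorem natDegree_fibre_C_X (s : R) : (fibre (C s) X).natDegree = 77 := by
  rw [fibre, natDegree_sub_eq_left_of_natDegree_lt (natDegree_C_mul_sqrtNegR_X_sq_lt s),
    natDegree_septic_X_pow]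

theorem monic_fibre_C_X (s : R) : (fibre (C s) X).Monic :=
  (monic_septic_X.pow 11).sub_of_left (degree_lt_degree (natDegree_C_mul_sqrtNegR_X_sq_lt s))

end Degree

variable {k : Type*} [Field k] {S : Type*} [CommRing S] [IsDomain S] {ψ : S →+* k} {s x y : S}

theorem nodup_roots_fibre {s : k} (hs : IsRegularValue s) : (fibre (C s) X).roots.Nodup := by
  classical
  refine Multiset.nodup_iff_count_le_one.mpr fun x => ?_
  rw [count_roots, ← not_lt, one_lt_rootMultiplicity_iff_isRoot (monic_fibre_C_X s).ne_zero]
  rintro ⟨hx, hderiv⟩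
  exact eval_derivative_fibre_ne_zero hs ((eval_fibre_C_X s x).symm.trans hx) hderiv

theorem mem_roots_fibre : x ∈ (fibre (C s) X).roots ↔ fibre s x = 0 := by
  rw [mem_roots (monic_fibre_C_X s).ne_zero, IsRoot.def, eval_fibre_C_X]

theorem map_fibre_C_X {R S : Type*} [CommRing R] [CommRing S] (φ : R →+* S) (s : R) :
    (fibre (C s) X).map φ = fibre (C (φ s)) X := by
  simpa using map_fibre (mapRingHom φ) (C s) X

theorem roots_fibre_map (hsplits : (fibre (C s) X).Splits) (ψ : S →+* k) :
    (fibre (C (ψ s)) X).roots = (fibre (C s) X).roots.map ψ := by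
  rw [← map_fibre_C_X]
  exact hsplits.roots_map_of_ne_zero ((monic_fibre_C_X s).map ψ).ne_zero

theorem image_fibre (hsplits : (fibre (C s) X).Splits) (ψ : S →+* k) :
    ψ '' {x | fibre s x = 0} = {x | fibre (ψ s) x = 0} := by
  ext x
  simp only [Set.mem_image, Set.mem_ofPred_eq, ← mem_roots_fibre, roots_fibre_map hsplits,
    Multiset.mem_map]

theorem injOn_fibre (hsplits : (fibre (C s) X).Splits) (hs : IsRegularValue (ψ s)) :
    Set.InjOn ψ {x | fibre s x = 0} := by
  have hnodup := nodup_roots_fibre hs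
  rw [roots_fibre_map hsplits] at hnodup
  intro x hx y hy
  exact Multiset.inj_on_of_nodup_map hnodup x (mem_roots_fibre.mpr hx) y (mem_roots_fibre.mpr hy)

theorem graphAdj_map_iff (hs : IsRegularValue (ψ s)) (hx : fibre s x = 0) (hy : fibre s y = 0)
    (hxy : x ≠ y) : graphAdj (ψ x) (ψ y) ↔ graphAdj x y := by
  constructor
  · intro h
    refine (graphPoly_eq_zero_or_cofactor_eq_zero hx hy hxy).resolve_right fun hcofactor => ?_
    refine cofactor_ne_zero_of_graphPoly_eq_zero hs ?_ ?_ h ?_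
    · rw [← map_fibre, hx, map_zero]
    · rw [← map_fibre, hy, map_zero]
    · rw [← map_cofactor, hcofactor, map_zero]
  · intro h
    rw [graphAdj, ← map_graphPoly, h, map_zero]

theorem isIntegral_of_fibre_eq_zero {A B : Type*} [CommRing A] [Nontrivial A] [CommRing B]
    [Algebra A B] {t : A} {x : B} (hx : fibre (algebraMap A B t) x = 0) : IsIntegral A x :=
  ⟨_, monic_fibre_C_X t, by rw [← eval_map, map_fibre_C_X, eval_fibre_C_X, hx]⟩

theorem splits_fibre_integralClosure {A : Type*} [CommRing A] [Nontrivial A] [Algebra A S] {t : A}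
    (hsplits : (fibre (C (algebraMap A S t)) X).Splits) :
    (fibre (C (algebraMap A (integralClosure A S) t)) X).Splits := by
  have hmap : (fibre (C (algebraMap A (integralClosure A S) t)) X).map (algebraMap _ S) =
      fibre (C (algebraMap A S t)) X := map_fibre_C_X _ _
  refine .of_splits_map_of_injective Subtype.val_injective (hmap ▸ hsplits) fun x hx => ?_
  rw [hmap, mem_roots_fibre] at hx
  exact ⟨⟨x, isIntegral_of_fibre_eq_zero hx⟩, rfl⟩

theorem IsRegularValue.map {k' : Type*} [Field k'] {s : k} (hs : IsRegularValue s) (φ : k →+* k') :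
    IsRegularValue (φ s) where
  eleven_ne_zero := by simpa only [map_ofNat] using (map_ne_zero φ).mpr hs.eleven_ne_zero
  ne_zero := (map_ne_zero φ).mpr hs.ne_zero
  one_add_ne_zero := by
    simpa only [map_add, map_mul, map_one, map_pow, map_ofNat] using
      (map_ne_zero φ).mpr hs.one_add_ne_zero

theorem mem_rootSet_fibre {L : Type*} [Field L] [Algebra k L] {s : k} {x : L} :
    x ∈ (fibre (C s) X).rootSet L ↔ fibre (algebraMap k L s) x = 0 := by
  classical
  rw [rootSet_def, Finset.mem_coe, Multiset.mem_toFinset, aroots, map_fibre_C_X, mem_roots_fibre]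

theorem nonempty_frobeniusReduction {A K L : Type} [CommRing A] [IsDomain A] [IsNoetherianRing A]
    [IsIntegrallyClosed A] [Field K] [Field L] [Algebra A K] [IsFractionRing A K] [Algebra K L]
    [FiniteDimensional K L] [IsGalois K L] {ℓ : ℕ} [Fact ℓ.Prime] (φ : A →+* ZMod ℓ) {t : A}
    (hsplits : (fibre (C (algebraMap K L (algebraMap A K t))) X).Splits)
    (hφ : IsRegularValue (φ t)) :
    Nonempty (FrobeniusReduction (L ≃ₐ[K] L)
      (fun x y : (fibre (C (algebraMap A K t)) X : K[X]).rootSet L => graphAdj (x : L) y)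
      (φ t)) := by
  let : Algebra A L := ((algebraMap K L).comp (algebraMap A K)).toAlgebra
  have : IsScalarTower A K L := .of_algebraMap_eq fun _ => rfl
  obtain ⟨κ, _, _, ψ, σ, hψ, hσ⟩ := exists_algEquiv_lifts_frobenius (K := K) (L := L) φ
  let s : integralClosure A L := algebraMap A _ t
  have hs : IsRegularValue (ψ s) := hψ t ▸ hφ.map (algebraMap _ κ)
  have hsplitsS : (fibre (C s) X).Splits := splits_fibre_integralClosure hsplits
  have hfibre (x : integralClosure A L) : fibre s x = 0 ↔
      (x : L) ∈ (fibre (C (algebraMap A K t)) X).rootSet L := by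
    rw [mem_rootSet_fibre, ← map_eq_zero_iff (algebraMap _ L) Subtype.val_injective, map_fibre]
    rfl
  let root (x : (fibre (C (algebraMap A K t)) X).rootSet L) : integralClosure A L :=
    ⟨x, isIntegral_of_fibre_eq_zero (mem_rootSet_fibre.mp x.2)⟩
  have hroot x : fibre s (root x) = 0 := (hfibre _).mpr x.2
  have hinj : root.Injective := fun x y h => Subtype.ext (congrArg (algebraMap _ L) h)
  refine ⟨{ κ, red := ψ ∘ root, frob := σ, red_injective := ?_, range_red := ?_,
            graphAdj_iff := ?_, red_frob_smul := fun x => hσ _ _ rfl }⟩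
  · exact fun x y h => hinj (injOn_fibre hsplitsS hs (hroot x) (hroot y) h)
  · rw [Set.range_comp, ← hψ, ← image_fibre hsplitsS ψ]
    congr
    exact Set.Subset.antisymm (Set.range_subset_iff.mpr hroot)
      fun x hx => ⟨⟨x, (hfibre x).mp hx⟩, rfl⟩
  · intro x y hxy
    refine (graphAdj_map_iff hs (hroot x) (hroot y) (hinj.ne hxy)).trans ?_
    rw [graphAdj, ← map_eq_zero_iff (algebraMap _ L) Subtype.val_injective, map_graphPoly]
    rfl

end RootReduction

section Irreducible

theorem irreducible_map_C_sub_C_X_mul_map {R : Type*} [CommRing R] [IsDomain R] {a b : R[X]}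
    (hb : b ≠ 0) (hab : IsRelPrime a b) : Irreducible (a.map C - C X * b.map C : R[X][X]) := by
  have hswap : Bivariate.swap (a.map C - C X * b.map C) = C (-b) * X + C a := by
    rw [map_sub, map_mul, Bivariate.swap_map_C, Bivariate.swap_map_C, Bivariate.swap_X, C_neg]
    ring
  rw [← MulEquiv.irreducible_iff (Bivariate.swap (R := R)), hswap]
  exact irreducible_C_mul_X_add_C (neg_ne_zero.mpr hb) hab.symm.neg_left

theorem isRelPrime_of_monic_of_forall_aeval_ne_zero {R k : Type*} [CommRing R] [IsDomain R]
    [Field k] [IsAlgClosed k] [Algebra R k] [FaithfulSMul R k] {a b : R[X]} (ha : a.Monic)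
    (hab : ∀ z : k, aeval z a = 0 → aeval z b ≠ 0) : IsRelPrime a b := by
  intro d hda hdb
  have hunit : IsUnit d.leadingCoeff := by
    obtain ⟨e, rfl⟩ := hda
    exact .of_mul_eq_one e.leadingCoeff ((leadingCoeff_mul d e).symm.trans ha)
  by_cases hdeg : d.degree = 0
  · rw [eq_C_of_degree_eq_zero hdeg] at hunit ⊢
    simpa using hunit
  · obtain ⟨z, hz⟩ := IsAlgClosed.exists_aeval_eq_zero k d hdeg
    exact absurd (aeval_eq_zero_of_dvd_aeval_eq_zero hdb hz)
      (hab z (aeval_eq_zero_of_dvd_aeval_eq_zero hda hz))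

theorem isRelPrime_septic_pow_sqrtNegR_sq :
    IsRelPrime (septic X ^ 11 : ℤ[X]) (sqrtNegR X ^ 2) := by
  refine isRelPrime_of_monic_of_forall_aeval_ne_zero (k := ℂ) (monic_septic_X.pow 11) fun z => ?_
  have hseptic : aeval z (septic X : ℤ[X]) = septic z := by
    simpa using map_septic (aeval z : ℤ[X] →ₐ[ℤ] ℂ).toRingHom X
  have hsqrt : aeval z (sqrtNegR X : ℤ[X]) = sqrtNegR z := by
    simpa using map_sqrtNegR (aeval z : ℤ[X] →ₐ[ℤ] ℂ).toRingHom X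
  rw [map_pow, map_pow, hseptic, hsqrt]
  exact fun h => pow_ne_zero 2
    (sqrtNegR_ne_zero_of_septic_eq_zero (by norm_num) (eq_zero_of_pow_eq_zero h))

theorem irreducible_fibre_of_isFractionRing {K : Type*} [Field K] [Algebra ℤ[X] K]
    [IsFractionRing ℤ[X] K] : Irreducible (fibre (C (algebraMap ℤ[X] K X)) X) := by
  rw [← map_fibre_C_X, ← (monic_fibre_C_X _).irreducible_iff_irreducible_map_fraction_map]
  have hne : (sqrtNegR X ^ 2 : ℤ[X]) ≠ 0 := by
    intro h
    have hunit := isRelPrime_septic_pow_sqrtNegR_sq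
    rw [h, isRelPrime_zero_right] at hunit
    have hdegree := natDegree_eq_zero_of_isUnit hunit
    rw [natDegree_septic_X_pow] at hdegree
    exact absurd hdegree (by norm_num)
  have hseptic : (septic X : ℤ[X]).map C = septic X := by
    simpa using map_septic (mapRingHom C) (X : ℤ[X])
  have hsqrt : (sqrtNegR X : ℤ[X]).map C = sqrtNegR X := by
    simpa using map_sqrtNegR (mapRingHom C) (X : ℤ[X])
  simpa only [fibre, Polynomial.map_pow, hseptic, hsqrt] using
    irreducible_map_C_sub_C_X_mul_map hne isRelPrime_septic_pow_sqrtNegR_sq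

end Irreducible

section GaloisAction

open MulAction

variable {K L : Type*} [Field K] [Field L] [Algebra K L] {f : K[X]}

theorem isPretransitive_rootSet [Normal K L] (hf : Irreducible f) :
    IsPretransitive (L ≃ₐ[K] L) (f.rootSet L) := by
  refine ⟨fun x y => ?_⟩
  have hx := minpoly.eq_of_irreducible hf (mem_rootSet.mp x.2).2
  have hy := minpoly.eq_of_irreducible hf (mem_rootSet.mp y.2).2
  obtain ⟨g, hg⟩ := (Normal.minpoly_eq_iff_mem_orbit L).mp (hy.symm.trans hx)
  exact ⟨g, Subtype.ext hg⟩

theorem faithfulSMul_rootSet [IsSplittingField K L f] :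
    FaithfulSMul (L ≃ₐ[K] L) (f.rootSet L) := by
  refine ⟨fun {σ τ} h => AlgEquiv.ext fun x => ?_⟩
  suffices AlgHom.equalizer σ.toAlgHom τ.toAlgHom = ⊤ from
    (AlgHom.mem_equalizer _ _ x).mp (this ▸ Algebra.mem_top)
  rw [eq_top_iff, ← IsSplittingField.adjoin_rootSet L f, Algebra.adjoin_le_iff]
  exact fun y hy => congrArg Subtype.val (h ⟨y, hy⟩)

theorem preservesAdj_graphAdj_rootSet :
    PreservesAdj (L ≃ₐ[K] L) fun x y : f.rootSet L => graphAdj (x : L) y := by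
  intro g x y
  have hmap : g (graphPoly (x : L) y) = graphPoly (g x) (g y) := map_graphPoly (g : L →+* L) x y
  exact (hmap ▸ map_eq_zero_iff g g.injective :)

theorem card_algEquiv_eq_of_isFractionRing {K L : Type} [Field K] [Field L] [Algebra ℤ[X] K]
    [IsFractionRing ℤ[X] K] [Algebra K L]
    [IsSplittingField K L (fibre (C (algebraMap ℤ[X] K X)) X)] :
    Nat.card (L ≃ₐ[K] L) = 887040 := by
  let s := algebraMap ℤ[X] K X
  have hirr : Irreducible (fibre (C s) X) := irreducible_fibre_of_isFractionRing
  have : CharZero K := IsFractionRing.charZero_of_isFractionRing ℤ[X]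
  have : FiniteDimensional K L := IsSplittingField.finiteDimensional L (fibre (C s) X)
  have : IsGalois K L := .of_separable_splitting_field hirr.separable
  have hsplits := IsSplittingField.splits L (fibre (C s) X)
  have : IsPretransitive (L ≃ₐ[K] L) ((fibre (C s) X).rootSet L) := isPretransitive_rootSet hirr
  have : FaithfulSMul (L ≃ₐ[K] L) ((fibre (C s) X).rootSet L) := faithfulSMul_rootSet
  refine card_eq_of_frobeniusReduction (Ω := (fibre (C s) X).rootSet L) ?_
    preservesAdj_graphAdj_rootSet fun s₀ hs₀ => ?_
  · rw [Nat.card_eq_fintype_card, card_rootSet_eq_natDegree hirr.separable hsplits,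
      natDegree_fibre_C_X]
  · have hX : eval₂RingHom (Int.castRingHom _) s₀ X = s₀ := eval₂_X _ _
    rw [map_fibre_C_X] at hsplits
    rw [← hX] at hs₀ ⊢
    exact nonempty_frobeniusReduction _ hsplits hs₀

end GaloisAction

/-! ### The function field -/

section FunctionField

open IntermediateField

theorem isFractionRing_int_polynomial {K : Type*} [Field K] [Algebra ℚ K] [Algebra ℤ[X] K]
    (htr : Transcendental ℚ (algebraMap ℤ[X] K X)) (htop : ℚ⟮algebraMap ℤ[X] K X⟯ = ⊤) :
    IsFractionRing ℤ[X] K := by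
  have hinj : Function.Injective (algebraMap ℤ[X] K) := by
    refine (injective_iff_map_eq_zero _).mpr fun g hg => ?_
    have haeval : aeval (algebraMap ℤ[X] K X) (g.map (Int.castRingHom ℚ)) =
        algebraMap ℤ[X] K g := by
      have : (aeval (algebraMap ℤ[X] K X) : ℚ[X] →ₐ[ℚ] K).toRingHom.comp
          (mapRingHom (Int.castRingHom ℚ)) = algebraMap ℤ[X] K := by ext <;> simp
      exact DFunLike.congr_fun this g
    rw [← (map_injective _ (RingHom.injective_int (Int.castRingHom ℚ))).eq_iff, Polynomial.map_zero]
    exact (transcendental_iff.mp htr) _ (haeval.trans hg)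
  have : FaithfulSMul ℤ[X] K := (faithfulSMul_iff_algebraMap_injective _ _).mpr hinj
  let ψ : FractionRing ℤ[X] →+* K := IsFractionRing.lift hinj
  have hψ (g : ℤ[X]) : ψ (algebraMap ℤ[X] _ g) = algebraMap ℤ[X] K g :=
    IsFractionRing.lift_algebraMap hinj g
  let E : IntermediateField ℚ K := ψ.fieldRange.toIntermediateField fun a => by
    rw [eq_ratCast]
    exact SubfieldClass.ratCast_mem _ a
  have hE : E = ⊤ := by
    rw [eq_top_iff, ← htop, adjoin_simple_le_iff]
    exact ⟨_, hψ X⟩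
  refine .of_field _ _ fun z => ?_
  obtain ⟨w, rfl⟩ : z ∈ E := hE ▸ mem_top
  obtain ⟨a, b, -, rfl⟩ := IsFractionRing.div_surjective (A := ℤ[X]) w
  exact ⟨a, b, by simp [hψ]⟩

/-- The parameter `s = t / (2²² (1 - t))` over which the fibre has equation `F`. -/
noncomputable def fibreParam : RatFunc ℚ := RatFunc.X / (2 ^ 22 * (1 - RatFunc.X))

theorem ratFuncX_ne_C (c : ℚ) : (RatFunc.X : RatFunc ℚ) ≠ RatFunc.C c := by
  rw [← RatFunc.algebraMap_X, ← RatFunc.algebraMap_C]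
  exact (RatFunc.algebraMap_injective ℚ).ne (X_ne_C c)

theorem one_sub_ratFuncX_ne_zero : (1 - RatFunc.X : RatFunc ℚ) ≠ 0 :=
  sub_ne_zero.mpr fun h => ratFuncX_ne_C 1 (by rw [map_one, h])

theorem two_pow_mul_one_sub_ratFuncX_ne_zero : (2 ^ 22 * (1 - RatFunc.X) : RatFunc ℚ) ≠ 0 :=
  mul_ne_zero (by norm_num) one_sub_ratFuncX_ne_zero

theorem ratFuncX_eq : RatFunc.X = 2 ^ 22 * fibreParam / (1 + 2 ^ 22 * fibreParam) := by
  have h := one_sub_ratFuncX_ne_zero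
  have h1 : 1 + 2 ^ 22 * fibreParam = 1 / (1 - RatFunc.X) := by
    rw [fibreParam]
    field_simp
    ring
  rw [h1, fibreParam]
  field_simp

theorem toRatAlgebra_eq_instAlgebraOfPolynomial :
    (DivisionRing.toRatAlgebra : Algebra ℚ (RatFunc ℚ)) = RatFunc.instAlgebraOfPolynomial ℚ ℚ :=
  Subsingleton.elim _ _

theorem transcendental_fibreParam : Transcendental ℚ fibreParam := by
  rw [toRatAlgebra_eq_instAlgebraOfPolynomial]
  refine RatFunc.transcendental_of_ne_C fibreParam ?_
  rintro ⟨c, hc⟩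
  refine ratFuncX_ne_C (2 ^ 22 * c / (1 + 2 ^ 22 * c)) ?_
  rw [ratFuncX_eq, hc]
  simp

theorem adjoin_simple_eq_top_of_ratFuncX_mem {k : Type*} [Field k] {f : RatFunc k}
    (h : ∀ E : Subfield (RatFunc k), f ∈ E → RatFunc.X ∈ E) : k⟮f⟯ = ⊤ := by
  rw [eq_top_iff, ← RatFunc.adjoin_X, adjoin_simple_le_iff]
  exact h k⟮f⟯.toSubfield (mem_adjoin_simple_self k f)

theorem adjoin_fibreParam : ℚ⟮fibreParam⟯ = ⊤ := by
  rw [toRatAlgebra_eq_instAlgebraOfPolynomial]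
  refine adjoin_simple_eq_top_of_ratFuncX_mem fun E hE => ?_
  have hmul : 2 ^ 22 * fibreParam ∈ E := mul_mem (pow_mem (ofNat_mem E 2) 22) hE
  rw [ratFuncX_eq]
  exact div_mem hmul (add_mem (one_mem E) hmul)

end FunctionField

section Specialization

theorem p_eq : p = 2 ^ 22 * septic X ^ 11 := by
  rw [p, mul_assoc, ← mul_pow, septic_X_eq]
  ring

theorem r_eq : r = -sqrtNegR X ^ 2 := by
  have hfactors (a b c d : ℚ[X]) : -11 ^ 4 * a ^ 4 * b ^ 4 * c ^ 4 * d ^ 2 =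
      -(121 * (a * b * c) ^ 2 * d) ^ 2 := by ring
  rw [r, hfactors, sqrtNegR, quadruplePart, doublePart]
  congr 6
  all_goals
    simp [intHorner, horner]
    ring

theorem F_eq : F = C (2 ^ 22 * (1 - RatFunc.X)) * fibre (C fibreParam) X := by
  have hseptic : (septic X : ℚ[X]).map (algebraMap ℚ (RatFunc ℚ)) = septic X := by
    simpa using map_septic (mapRingHom (algebraMap ℚ (RatFunc ℚ))) X
  have hsqrt : (sqrtNegR X : ℚ[X]).map (algebraMap ℚ (RatFunc ℚ)) = sqrtNegR X := by
    simpa using map_sqrtNegR (mapRingHom (algebraMap ℚ (RatFunc ℚ))) X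
  have hparam : C (2 ^ 22 * (1 - RatFunc.X)) * C fibreParam = C (RatFunc.X : RatFunc ℚ) := by
    rw [← C_mul, fibreParam, mul_div_cancel₀ _ two_pow_mul_one_sub_ratFuncX_ne_zero]
  rw [F, q, p_eq, r_eq, fibre, mul_sub, ← mul_assoc, hparam]
  simp only [Polynomial.map_sub, Polynomial.map_mul, Polynomial.map_pow, Polynomial.map_neg,
    Polynomial.map_ofNat, hseptic, hsqrt, C_mul, C_sub, C_pow, C_1, C_ofNat]
  ring

theorem isSplittingField_of_C_mul {K L : Type*} [Field K] [Field L] [Algebra K L] {f : K[X]}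
    {c : K} (hc : c ≠ 0) [IsSplittingField K L (C c * f)] : IsSplittingField K L f := by
  refine ⟨?_, ?_⟩
  · have hsplits := IsSplittingField.splits L (C c * f)
    rwa [Polynomial.map_mul, map_C,
      splits_mul_iff_right (C_ne_zero.mpr ((_root_.map_ne_zero _).mpr hc)) (.C _)] at hsplits
  · rw [← IsSplittingField.adjoin_rootSet L (C c * f), rootSet, rootSet, aroots_C_mul _ hc]

end Specialization

end BelyiM22

open BelyiM22

theorem belyi_deg77_stmt16 :
    F.natDegree = 77 ∧ Irreducible F ∧ Nat.card F.Gal = 887040 := by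
  let : Algebra ℤ[X] (RatFunc ℚ) := (eval₂RingHom (Int.castRingHom _) fibreParam).toAlgebra
  have hX : algebraMap ℤ[X] (RatFunc ℚ) X = fibreParam := eval₂_X _ _
  have : IsFractionRing ℤ[X] (RatFunc ℚ) := isFractionRing_int_polynomial
    (hX ▸ transcendental_fibreParam) (hX ▸ adjoin_fibreParam)
  let f : (RatFunc ℚ)[X] := fibre (C (algebraMap ℤ[X] (RatFunc ℚ) X)) X
  have hF : F = C (2 ^ 22 * (1 - RatFunc.X)) * f := F_eq.trans (by rw [← hX])
  have hc := two_pow_mul_one_sub_ratFuncX_ne_zero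
  refine ⟨?_, ?_, ?_⟩
  · rw [hF, natDegree_C_mul hc, natDegree_fibre_C_X]
  · rw [hF, irreducible_isUnit_mul (isUnit_C.mpr hc.isUnit)]
    exact irreducible_fibre_of_isFractionRing
  · have : IsSplittingField (RatFunc ℚ) F.SplittingField (C (2 ^ 22 * (1 - RatFunc.X)) * f) :=
      hF ▸ IsSplittingField.splittingField F
    have : IsSplittingField (RatFunc ℚ) F.SplittingField f := isSplittingField_of_C_mul hc
    exact card_algEquiv_eq_of_isFractionRing
end
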